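/- arXiv:2212.07195 — 2 statements merged into one kernel-verified Lean document; each statement's English description precedes it below -/
import Mathlib

section
/- Riesz potential of the weighted power nonlinearity: let n ≥ 3 be an integer, 0 < s ≤ 1, 0 < α < n, 0 < b < n, p ≥ 2, and let r satisfy max{s, s + (α−b)/p} < n/r < s + (n−b)/p. Define r₃ by 1/r₃ = p/r + (b−α−sp)/n. Then there is a constant C such that for all Schwartz functions u on ℝⁿ, ‖ I_α ∗ (|·|^{−b}|u|^p) ‖_{L^{r₃, 4(p+1)/p}} ≤ C ‖(−Δ)^{s/2} u‖^p_{L^{r,2}}. -/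
/-!
The proof composes four bounds in Lorentz spaces. Write `q = 4(p+1)/p`, so that `pq = 4(p+1) ≥ 2`.

* A Schwartz function `u` is a Riesz potential of order `s` of `g = (-Δ)^{s/2} u`; only the
  pointwise bound `|u| ≤ C I_s |g|` is needed (`enorm_le_rz_fracLap`). It follows by writing
  `|ξ| ^ (-s)` as a superposition of Gaussians in Fourier inversion, since the Fourier transform of
  a Gaussian is a positive heat kernel and these superpose to the Riesz kernel.
* `L^{r,2} ⊆ L^{r,pq}`, and `I_s` maps `L^{r,pq}` to `L^{1/x,pq}`, where `x = 1/r - s/n`.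
* Multiplying `|u| ^ p` by `|x| ^ (-b)`, a function in weak `L^{n/b}`, lands in `L^{1/z,q}`, where
  `z = p x + b/n` (`dS_weight_rpow_le`).
* `I_α` maps `L^{1/z,q}` to `L^{r₃,q}`, as `1/r₃ = z - α/n`.

The hypotheses on `n / r` say that `s/n < 1/r` and `α/n < z < 1`; together with `1/r < 1`, which
follows from `n ≥ 3`, this is the range of the Hardy–Littlewood–Sobolev inequality (`dS_rz_le`).

That inequality is proved directly. Everything is done with functions valued in `ℝ≥0∞`, for which
the `q`-th power of the quasinorm of `L^{1/x,q}` is comparable to the sum over `k : ℤ` of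
`(2 ^ (k x) f*(2 ^ k)) ^ q`. Cutting `f` at the levels `f*(2 ^ j)` and using that the kernel
`|x| ^ (a - n)` integrates over a set `A` to at most `C |A| ^ (a/n)`, one bounds the rearrangement
of the potential at `2 ^ k` by a sum over `j` (`rr_rz_le`). With the weights inserted this is a
convolution on `ℤ` with a two-sided geometric kernel, and Young's inequality concludes.

The Lorentz quasinorm of the statement is real-valued inside and equals that of the `ℝ≥0∞` version
for bounded functions, such as `g`. For the Riesz potential on the left only one inequality is
needed, and it holds for every function.
-/

open MeasureTheory Real FourierTransform
open scoped ENNReal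

noncomputable section

variable {n : ℕ}

/-- The distribution function `|{x : |f x| > λ}|`. -/
def distFn (f : EuclideanSpace ℝ (Fin n) → ℂ) (l : ℝ) : ℝ≥0∞ :=
  volume {x | l < ‖f x‖}

/-- The decreasing rearrangement `f*`. -/
def rearr (f : EuclideanSpace ℝ (Fin n) → ℂ) (t : ℝ) : ℝ :=
  sInf {l : ℝ | 0 < l ∧ distFn f l ≤ ENNReal.ofReal t}

/-- The Lorentz quasinorm `‖f‖_{L^{p,q}}`; the second exponent may be `∞`. -/
def lorentz (p : ℝ) (q : ℝ≥0∞) (f : EuclideanSpace ℝ (Fin n) → ℂ) : ℝ≥0∞ :=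
  if q = ∞ then ⨆ t ∈ Set.Ioi (0:ℝ), ENNReal.ofReal (t ^ (1/p) * rearr f t)
  else (∫⁻ t in Set.Ioi (0:ℝ),
      ENNReal.ofReal (t ^ (1/p) * rearr f t) ^ q.toReal / ENNReal.ofReal t) ^ (1/q.toReal)

/-- The fractional Laplacian `(-Δ)^{s/2}`, the Fourier multiplier with symbol `|ξ|^s`. -/
def fracLap (s : ℝ) (f : EuclideanSpace ℝ (Fin n) → ℂ) : EuclideanSpace ℝ (Fin n) → ℂ :=
  𝓕⁻ (fun ξ => ((‖ξ‖ ^ s : ℝ) : ℂ) * 𝓕 f ξ)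

/-- The Bessel operator `(1-Δ)^{s/2}`, the Fourier multiplier with symbol `(1+|ξ|²)^{s/2}`. -/
def besselOp (s : ℝ) (f : EuclideanSpace ℝ (Fin n) → ℂ) : EuclideanSpace ℝ (Fin n) → ℂ :=
  𝓕⁻ (fun ξ => (((1 + ‖ξ‖ ^ 2) ^ (s/2) : ℝ) : ℂ) * 𝓕 f ξ)

/-- The free Schrödinger propagator `e^{itΔ}`, Fourier multiplier with symbol `e^{-it|ξ|²}`. -/
def schrod (t : ℝ) (f : EuclideanSpace ℝ (Fin n) → ℂ) : EuclideanSpace ℝ (Fin n) → ℂ :=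
  𝓕⁻ (fun ξ => Complex.exp (-Complex.I * t * (‖ξ‖ ^ 2 : ℝ)) * 𝓕 f ξ)

/-- The Riesz kernel `K_α`. -/
def rieszKernel (α : ℝ) (x : EuclideanSpace ℝ (Fin n)) : ℝ :=
  Real.Gamma ((n - α) / 2) /
    (Real.Gamma (α / 2) * Real.pi ^ ((n : ℝ) / 2) * 2 ^ α * ‖x‖ ^ ((n : ℝ) - α))

/-- The Riesz potential `I_α f = K_α ∗ f`. -/
def rieszPot (α : ℝ) (f : EuclideanSpace ℝ (Fin n) → ℂ) (x : EuclideanSpace ℝ (Fin n)) : ℂ :=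
  ∫ y, (rieszKernel α (x - y) : ℂ) * f y

/-- The nonlinearity `F(u) = λ (I_α ∗ |·|^{-b}|u|^p) |x|^{-b} |u|^{p-2} u`. -/
def Fnl (lam α b p : ℝ) (u : EuclideanSpace ℝ (Fin n) → ℂ)
    (x : EuclideanSpace ℝ (Fin n)) : ℂ :=
  lam * rieszPot α (fun y => ((‖y‖ ^ (-b) * ‖u y‖ ^ p : ℝ) : ℂ)) x *
    ((‖x‖ ^ (-b) : ℝ) : ℂ) * ((‖u x‖ ^ (p - 2) : ℝ) : ℂ) * u x

/-- Mixed-norm in time: `‖g‖_{L^q_t(I)}` for an `ℝ≥0∞`-valued `g`. -/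
def timeLp (q : ℝ≥0∞) (I : Set ℝ) (g : ℝ → ℝ≥0∞) : ℝ≥0∞ :=
  if q = ∞ then essSup g (volume.restrict I)
  else (∫⁻ t in I, g t ^ q.toReal) ^ (1/q.toReal)

/-- The `H^s = W^s_{2,2}` norm. -/
def hsNorm (s : ℝ) (f : EuclideanSpace ℝ (Fin n) → ℂ) : ℝ≥0∞ :=
  lorentz 2 2 (besselOp s f)

end

/-! ### Rearrangements and dyadic sums -/

/-- The decreasing rearrangement `f*(t)` of a function with values in `ℝ≥0∞`, as an infimum in
`ℝ≥0∞`: it is `⊤` when every superlevel set is larger than `t`. -/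
noncomputable def rr {X : Type*} [MeasureSpace X] (f : X → ℝ≥0∞) (t : ℝ≥0∞) : ℝ≥0∞ :=
  sInf {l | volume {x | l < f x} ≤ t}

section rearrangement

variable {X : Type*} [MeasureSpace X]

theorem rr_le {f : X → ℝ≥0∞} {t l : ℝ≥0∞} (h : volume {x | l < f x} ≤ t) : rr f t ≤ l :=
  sInf_le h

theorem lt_of_lt_rr {f : X → ℝ≥0∞} {t l : ℝ≥0∞} (h : l < rr f t) : t < volume {x | l < f x} := by
  by_contra hc
  exact absurd (rr_le (not_lt.1 hc)) (not_le.2 h)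

/-- The infimum defining the rearrangement is attained, by continuity of the measure from below. -/
theorem volume_rr_lt_le (f : X → ℝ≥0∞) (t : ℝ≥0∞) : volume {x | rr f t < f x} ≤ t := by
  have hne : {l : ℝ≥0∞ | volume {x | l < f x} ≤ t}.Nonempty := ⟨⊤, by simp⟩
  obtain ⟨v, hv, hvt, hmem⟩ := exists_seq_tendsto_sInf hne (OrderBot.bddBelow _)
  have hU : {x | rr f t < f x} = ⋃ k, {x | v k < f x} := by
    ext x
    simp only [Set.mem_ofPred_eq, Set.mem_iUnion]
    constructor
    · intro hx
      exact ((hvt.eventually (gt_mem_nhds hx)).exists)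
    · rintro ⟨k, hk⟩
      exact lt_of_le_of_lt (sInf_le (hmem k)) hk
  rw [hU]
  have hmono : Monotone fun k => {x | v k < f x} := fun i j hij x hx =>
    lt_of_le_of_lt (hv hij) hx
  rw [hmono.measure_iUnion]
  exact iSup_le hmem

theorem rr_mono {f g : X → ℝ≥0∞} (h : ∀ x, f x ≤ g x) (t : ℝ≥0∞) : rr f t ≤ rr g t :=
  rr_le ((measure_mono fun x (hx : _ < f x) => lt_of_lt_of_le hx (h x)).trans
    (volume_rr_lt_le g t))

theorem rr_anti (f : X → ℝ≥0∞) {t t' : ℝ≥0∞} (h : t ≤ t') : rr f t' ≤ rr f t :=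
  rr_le ((volume_rr_lt_le f t).trans h)

theorem rr_const_mul_le {c : ℝ≥0∞} (f : X → ℝ≥0∞) (t : ℝ≥0∞) :
    rr (fun x => c * f x) t ≤ c * rr f t :=
  rr_le ((measure_mono fun x (hx : _ < c * f x) => lt_of_mul_lt_mul_left' hx).trans
    (volume_rr_lt_le f t))

end rearrangement

/-- The dyadic form of the `q`-th power of the Lorentz quasinorm of `L^{1/x,q}`: the sum over `k`
of `(2 ^ (k x) f*(2 ^ k)) ^ q`. The first exponent enters through its reciprocal `x`. -/
noncomputable def dS {X : Type*} [MeasureSpace X] (x q : ℝ) (f : X → ℝ≥0∞) : ℝ≥0∞ :=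
  ∑' k : ℤ, ((2 : ℝ≥0∞) ^ ((k : ℝ) * x) * rr f ((2 : ℝ≥0∞) ^ (k : ℝ))) ^ q

/-- Layer decomposition: almost every `y` with `f y ≠ 0` lies in a layer
`f*(2 ^ (j + 1)) < f y ≤ f*(2 ^ j)`. Finiteness of `dS` makes `f*` vanish at infinity, so that no
nonzero value of `f` lies below all the layers; `f y` lies above all of them only on a null set. -/
theorem ae_le_tsum_layers {X : Type*} [MeasureSpace X] {f : X → ℝ≥0∞} {x q : ℝ} (hx : 0 < x)
    (hq : 0 < q) (hf : dS x q f ≠ ⊤) :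
    ∀ᵐ y, f y ≤ ∑' j : ℤ, rr f ((2 : ℝ≥0∞) ^ (j : ℝ)) *
      {y | rr f ((2 : ℝ≥0∞) ^ ((j : ℝ) + 1)) < f y}.indicator 1 y := by
  -- `f` exceeds every `f*(2 ^ (-j))` only on a set of measure at most `2 ^ (-j)` for all `j`
  have hnull : volume {y | ∀ j : ℤ, rr f ((2 : ℝ≥0∞) ^ (j : ℝ)) < f y} = 0 := by
    have h1 : ∀ j : ℕ, volume {y | ∀ j : ℤ, rr f ((2 : ℝ≥0∞) ^ (j : ℝ)) < f y} ≤
        (2⁻¹ : ℝ≥0∞) ^ j := fun j => by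
      refine (measure_mono (fun y (hy : ∀ j : ℤ, rr f ((2 : ℝ≥0∞) ^ (j : ℝ)) < f y) =>
        show rr f ((2 : ℝ≥0∞) ^ ((-(j : ℤ) : ℤ) : ℝ)) < f y from hy _)).trans
          ((volume_rr_lt_le f _).trans ?_)
      push_cast
      rw [ENNReal.rpow_neg, ENNReal.rpow_natCast, ENNReal.inv_pow]
    have h2 := ENNReal.tendsto_pow_atTop_nhds_zero_of_lt_one (r := 2⁻¹) (by simp)
    exact le_antisymm (ge_of_tendsto' h2 h1) bot_le
  have hae : ∀ᵐ y, ¬ ∀ j : ℤ, rr f ((2 : ℝ≥0∞) ^ (j : ℝ)) < f y := by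
    rw [ae_iff]; simpa using hnull
  filter_upwards [hae] with y hy
  by_cases h0 : f y = 0
  · simp [h0]
  push Not at hy
  obtain ⟨j₀, hj₀⟩ := hy
  -- boundedness of the weighted terms forces `rr f (2 ^ j) → 0` as `j → ∞`
  have hex : ∃ j : ℤ, rr f ((2 : ℝ≥0∞) ^ (j : ℝ)) < f y := by
    by_contra hc
    push Not at hc
    have h1 : ∀ j : ℕ, f y ^ q * ((2 : ℝ≥0∞) ^ (x * q)) ^ j ≤ dS x q f := fun j => by
      refine le_trans ?_ (ENNReal.le_tsum (j : ℤ))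
      have := hc (j : ℤ)
      push_cast at this ⊢
      rw [ENNReal.mul_rpow_of_nonneg _ _ hq.le, mul_comm, ← ENNReal.rpow_natCast,
        ← ENNReal.rpow_mul, ← ENNReal.rpow_mul]
      have e : (j : ℝ) * x * q = x * q * j := by ring
      rw [e]
      gcongr
    have h2 : Filter.Tendsto (fun j : ℕ => f y ^ q * ((2 : ℝ≥0∞) ^ (x * q)) ^ j) Filter.atTop
        (nhds ⊤) := by
      have h3 : Filter.Tendsto (fun j : ℕ => ((2 : ℝ≥0∞) ^ (x * q)) ^ j) Filter.atTop
          (nhds ⊤) := by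
        apply ENNReal.tendsto_pow_atTop_nhds_top_iff.2
        exact ENNReal.one_lt_rpow (by norm_num) (by positivity)
      have h4 := ENNReal.Tendsto.const_mul (a := f y ^ q) h3 (Or.inl ENNReal.top_ne_zero)
      rwa [ENNReal.mul_top] at h4
      simp [h0, hq.le]
    exact hf (top_le_iff.1 (le_of_tendsto' h2 h1))
  obtain ⟨j₁, hj₁⟩ := hex
  have hlt : j₀ < j₁ := by
    by_contra hc
    have : rr f ((2 : ℝ≥0∞) ^ (j₀ : ℝ)) ≤ rr f ((2 : ℝ≥0∞) ^ (j₁ : ℝ)) :=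
      rr_anti f (ENNReal.rpow_le_rpow_of_exponent_le (by norm_num)
        (by exact_mod_cast not_lt.1 hc))
    exact absurd hj₁ (not_lt.2 (hj₀.trans this))
  obtain ⟨j, hjP, hj'⟩ := Int.exists_least_of_bdd
    (P := fun j => rr f ((2 : ℝ≥0∞) ^ (j : ℝ)) < f y) ⟨j₀, fun z hz => by
      by_contra hc
      exact absurd (hz.trans_le (hj₀.trans (rr_anti f (ENNReal.rpow_le_rpow_of_exponent_le
        (by norm_num) (by exact_mod_cast (not_le.1 hc).le))))) (lt_irrefl _)⟩ ⟨j₁, hj₁⟩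
  refine le_trans ?_ (ENNReal.le_tsum (j - 1))
  have h5 : ¬ rr f ((2 : ℝ≥0∞) ^ (((j - 1 : ℤ) : ℝ))) < f y := fun h => by
    have := hj' _ h
    omega
  have h6 : ((j - 1 : ℤ) : ℝ) + 1 = j := by push_cast; ring
  rw [h6, Set.indicator_of_mem (by exact hjP)]
  simpa using h5

/-! ### The Riesz kernel on sets of finite measure -/

theorem ennreal_rpow_anti {x y : ℝ≥0∞} {z : ℝ} (h : x ≤ y) (hz : z ≤ 0) : y ^ z ≤ x ^ z := by
  obtain ⟨w, rfl⟩ : ∃ w, z = -w := ⟨-z, by ring⟩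
  rw [ENNReal.rpow_neg, ENNReal.rpow_neg]
  exact ENNReal.inv_le_inv.2 (ENNReal.rpow_le_rpow h (by linarith))

theorem lintegral_ball_kernel {n : ℕ} (hn : 0 < n) {a : ℝ} (ha : 0 < a) :
    ∃ C : ℝ≥0∞, C ≠ ⊤ ∧ ∀ ρ : ℝ, 0 < ρ →
      ∫⁻ z in Metric.ball (0 : EuclideanSpace ℝ (Fin n)) ρ, ‖z‖ₑ ^ (a - n) ≤
        C * ENNReal.ofReal ρ ^ a := by
  have : Nonempty (Fin n) := ⟨⟨0, hn⟩⟩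
  refine ⟨ENNReal.ofReal (n * volume.real (Metric.ball (0 : EuclideanSpace ℝ (Fin n)) 1) / a),
    ENNReal.ofReal_ne_top, fun ρ hρ => ?_⟩
  have hpow : ∀ y ∈ Set.Ioo 0 ρ, y ^ (n - 1) • y ^ (a - n) = y ^ (a - 1) := fun y hy => by
    rw [smul_eq_mul, ← Real.rpow_natCast, ← Real.rpow_add hy.1]
    congr 1
    rw [Nat.cast_sub hn]; push_cast; ring
  have hint1 : IntegrableOn (fun y : ℝ => y ^ (a - 1)) (Set.Ioo 0 ρ) := by
    have := (intervalIntegral.intervalIntegrable_rpow' (a := 0) (b := ρ) (r := a - 1)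
      (by linarith))
    rw [intervalIntegrable_iff_integrableOn_Ioo_of_le hρ.le] at this
    exact this
  have hint : IntegrableOn (fun z : EuclideanSpace ℝ (Fin n) => ‖z‖ ^ (a - n))
      (Metric.ball 0 ρ) := by
    rw [integrableOn_fun_norm_addHaar volume (f := fun y : ℝ => y ^ (a - n))]
    rw [finrank_euclideanSpace_fin]
    exact (integrableOn_congr_fun hpow measurableSet_Ioo).2 hint1
  have hval : ∫ z in Metric.ball (0 : EuclideanSpace ℝ (Fin n)) ρ, ‖z‖ ^ (a - n) =
      n * volume.real (Metric.ball (0 : EuclideanSpace ℝ (Fin n)) 1) * (ρ ^ a / a) := by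
    have h1 : ∀ z : EuclideanSpace ℝ (Fin n), (Metric.ball 0 ρ).indicator
        (fun z : EuclideanSpace ℝ (Fin n) => ‖z‖ ^ (a - n)) z =
        (Set.Iio ρ).indicator (fun y : ℝ => y ^ (a - n)) ‖z‖ := fun z => by
      simp [Set.indicator]
    rw [← integral_indicator measurableSet_ball]
    simp_rw [h1]
    rw [integral_fun_norm_addHaar volume ((Set.Iio ρ).indicator (fun y : ℝ => y ^ (a - n)))]
    rw [finrank_euclideanSpace_fin, nsmul_eq_mul, smul_eq_mul, mul_assoc]
    congr 2
    have h2 : ∀ y : ℝ, y ^ (n - 1) • (Set.Iio ρ).indicator (fun y : ℝ => y ^ (a - n)) y =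
        (Set.Iio ρ).indicator (fun y : ℝ => y ^ (n - 1) • y ^ (a - n)) y := fun y => by
      by_cases h : y ∈ Set.Iio ρ <;> simp [h]
    simp_rw [h2]
    rw [setIntegral_indicator measurableSet_Iio, Set.Ioi_inter_Iio,
      setIntegral_congr_fun measurableSet_Ioo hpow, ← integral_Ioc_eq_integral_Ioo,
      ← intervalIntegral.integral_of_le hρ.le, integral_rpow (Or.inl (by linarith))]
    simp [Real.zero_rpow ha.ne']
  calc ∫⁻ z in Metric.ball (0 : EuclideanSpace ℝ (Fin n)) ρ, ‖z‖ₑ ^ (a - n)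
      = ∫⁻ z in Metric.ball (0 : EuclideanSpace ℝ (Fin n)) ρ, ENNReal.ofReal (‖z‖ ^ (a - n)) := by
        refine lintegral_congr_ae (ae_restrict_of_ae ?_)
        filter_upwards [Measure.ae_ne volume (0 : EuclideanSpace ℝ (Fin n))] with z hz
        rw [← ofReal_norm, ENNReal.ofReal_rpow_of_pos (norm_pos_iff.2 hz)]
    _ = ENNReal.ofReal (∫ z in Metric.ball (0 : EuclideanSpace ℝ (Fin n)) ρ, ‖z‖ ^ (a - n)) :=
        (ofReal_integral_eq_lintegral_ofReal hint
          (Filter.Eventually.of_forall fun z => by positivity)).symm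
    _ = _ := by
        rw [hval, ENNReal.ofReal_rpow_of_pos hρ, ← ENNReal.ofReal_mul (by positivity)]
        congr 1; ring
    _ ≤ _ := le_rfl

/-- The kernel `|x - y| ^ (a - n)` integrates over `A` to at most a constant times
`|A| ^ (a / n)`: near `y` integrate over the ball of radius `|A| ^ (1 / n)`, away from it use the
size of the kernel on the boundary of that ball. -/
theorem lintegral_kernel_le {n : ℕ} (hn : 0 < n) {a : ℝ} (ha : 0 < a) (han : a < n) :
    ∃ C : ℝ≥0∞, C ≠ 0 ∧ C ≠ ⊤ ∧ ∀ (A : Set (EuclideanSpace ℝ (Fin n)))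
      (y : EuclideanSpace ℝ (Fin n)),
      ∫⁻ x in A, ‖x - y‖ₑ ^ (a - n) ≤ C * volume A ^ (a / n) := by
  obtain ⟨C, hC, hball⟩ := lintegral_ball_kernel hn ha
  have hn' : (0 : ℝ) < n := by exact_mod_cast hn
  refine ⟨C + 1, by simp, by simp [hC], fun A y => ?_⟩
  rcases eq_or_ne (volume A) 0 with h0 | h0
  · rw [Measure.restrict_eq_zero.2 h0]; simp
  rcases eq_or_ne (volume A) ⊤ with hT | hT
  · rw [hT, ENNReal.top_rpow_of_pos (by positivity), ENNReal.mul_top (by simp)]; exact le_top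
  set m := (volume A).toReal with hm
  have hmpos : 0 < m := ENNReal.toReal_pos h0 hT
  have hmA : volume A = ENNReal.ofReal m := (ENNReal.ofReal_toReal hT).symm
  -- the radius for which a ball has volume comparable to that of `A`
  set ρ : ℝ := m ^ (1 / (n : ℝ)) with hρ
  have hρpos : 0 < ρ := by positivity
  have hpt : ∀ x : EuclideanSpace ℝ (Fin n), ‖x - y‖ₑ ^ (a - n) ≤
      (Metric.ball y ρ).indicator (fun x => ‖x - y‖ₑ ^ (a - n)) x +
        ENNReal.ofReal ρ ^ (a - n) := fun x => by
    by_cases hx : x ∈ Metric.ball y ρ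
    · simp [Set.indicator_of_mem hx]
    · have h1 : ρ ≤ ‖x - y‖ := by simpa [dist_eq_norm] using hx
      rw [Set.indicator_of_notMem hx, zero_add, ← ofReal_norm]
      exact ennreal_rpow_anti (ENNReal.ofReal_le_ofReal h1) (by linarith)
  calc ∫⁻ x in A, ‖x - y‖ₑ ^ (a - n)
      ≤ ∫⁻ x in A, ((Metric.ball y ρ).indicator (fun x => ‖x - y‖ₑ ^ (a - n)) x +
        ENNReal.ofReal ρ ^ (a - n)) := lintegral_mono hpt
    _ = (∫⁻ x in A, (Metric.ball y ρ).indicator (fun x => ‖x - y‖ₑ ^ (a - n)) x) +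
        ENNReal.ofReal ρ ^ (a - n) * volume A := by
        rw [lintegral_add_right _ measurable_const, setLIntegral_const]
    _ ≤ (∫⁻ x, (Metric.ball y ρ).indicator (fun x => ‖x - y‖ₑ ^ (a - n)) x) +
        ENNReal.ofReal ρ ^ (a - n) * volume A := by
        exact add_le_add_left (setLIntegral_le_lintegral _ _) _
    _ = (∫⁻ z in Metric.ball (0 : EuclideanSpace ℝ (Fin n)) ρ, ‖z‖ₑ ^ (a - n)) +
        ENNReal.ofReal ρ ^ (a - n) * volume A := by
        congr 1
        rw [← lintegral_indicator measurableSet_ball, ← lintegral_sub_right_eq_self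
          ((Metric.ball 0 ρ).indicator fun z : EuclideanSpace ℝ (Fin n) => ‖z‖ₑ ^ (a - n)) y]
        congr 1 with x
        simp [Set.indicator, dist_eq_norm]
    _ ≤ C * ENNReal.ofReal ρ ^ a + ENNReal.ofReal ρ ^ (a - n) * volume A := by
        gcongr; exact hball ρ hρpos
    _ = (C + 1) * volume A ^ (a / n) := by
        have e1 : ENNReal.ofReal ρ ^ a = volume A ^ (a / n) := by
          rw [hmA, ENNReal.ofReal_rpow_of_pos hρpos, ENNReal.ofReal_rpow_of_pos hmpos, hρ,
            ← Real.rpow_mul hmpos.le]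
          congr 2; ring
        have e2 : ENNReal.ofReal ρ ^ (a - n) * volume A = volume A ^ (a / n) := by
          rw [hmA, ENNReal.ofReal_rpow_of_pos hρpos, ENNReal.ofReal_rpow_of_pos hmpos, hρ,
            ← Real.rpow_mul hmpos.le, ← ENNReal.ofReal_mul (by positivity)]
          congr 1
          nth_rewrite 2 [← Real.rpow_one m]
          rw [← Real.rpow_add hmpos]
          congr 1; field_simp; ring
        rw [e1, e2]; ring

/-- The Riesz potential of order `a` of a nonnegative function, with the kernel `|x| ^ (a - n)`
not normalised. The kernel takes values in `ℝ≥0∞`, so for `a < n` it is `⊤` on the diagonal. -/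
noncomputable def rz {n : ℕ} (a : ℝ) (f : EuclideanSpace ℝ (Fin n) → ℝ≥0∞)
    (x : EuclideanSpace ℝ (Fin n)) : ℝ≥0∞ :=
  ∫⁻ y, ‖x - y‖ₑ ^ (a - n) * f y

theorem measurable_rz {n : ℕ} (a : ℝ) {f : EuclideanSpace ℝ (Fin n) → ℝ≥0∞}
    (hf : Measurable f) : Measurable (rz a f) := by
  unfold rz
  apply Measurable.lintegral_prod_right'
    (f := fun z : EuclideanSpace ℝ (Fin n) × EuclideanSpace ℝ (Fin n) =>
      ‖z.1 - z.2‖ₑ ^ (a - n) * f z.2)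
  fun_prop

/-- The rearrangement of a Riesz potential at the dyadic points. The kernel is
integrated over `F j × A`, where `F j` is the superlevel set of `f` carrying the `j`-th layer, of
measure at most `2 ^ (j + 1)`, and `A` is a set of measure larger than `2 ^ k` on which the
potential is large; the kernel bound applies in either variable, which gives the minimum. -/
theorem rr_rz_le {n : ℕ} (hn : 0 < n) {a : ℝ} (ha : 0 < a) (han : a < n) :
    ∃ C : ℝ≥0∞, C ≠ ⊤ ∧ ∀ (x q : ℝ), 0 < x → 0 < q →
      ∀ f : EuclideanSpace ℝ (Fin n) → ℝ≥0∞, Measurable f → dS x q f ≠ ⊤ → ∀ k : ℤ,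
      rr (rz a f) ((2 : ℝ≥0∞) ^ (k : ℝ)) ≤ C * ∑' j : ℤ, rr f ((2 : ℝ≥0∞) ^ (j : ℝ)) *
        min ((2 : ℝ≥0∞) ^ ((j : ℝ) * (a / n))) ((2 : ℝ≥0∞) ^ ((j : ℝ) + k * (a / n - 1))) := by
  obtain ⟨C, hC0, hC, hker⟩ := lintegral_kernel_le hn ha han
  have hn' : (0 : ℝ) < n := by exact_mod_cast hn
  have han' : a / n < 1 := by rwa [div_lt_one hn']
  refine ⟨2 * C, ENNReal.mul_ne_top (by simp) hC, fun x q hx hq f hf hS k => ?_⟩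
  have hlayers := ae_le_tsum_layers hx hq hS
  set F : ℤ → Set (EuclideanSpace ℝ (Fin n)) := fun j =>
    {y | rr f ((2 : ℝ≥0∞) ^ ((j : ℝ) + 1)) < f y} with hF
  have hFm : ∀ j, MeasurableSet (F j) := fun j => measurableSet_lt measurable_const hf
  have hFv : ∀ j, volume (F j) ≤ (2 : ℝ≥0∞) ^ ((j : ℝ) + 1) := fun j => volume_rr_lt_le f _
  refine le_of_forall_lt fun l hl => ?_
  obtain ⟨l', hll', hl'⟩ := exists_between hl
  refine hll'.trans_le ?_
  have hlt := lt_of_lt_rr hl'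
  have hm := measurable_rz a hf
  -- a subset of finite measure larger than `2 ^ k` on which the potential exceeds the level
  obtain ⟨R, hR⟩ : ∃ R : ℕ, (2 : ℝ≥0∞) ^ (k : ℝ) <
      volume ({z | l' < rz a f z} ∩ Metric.ball 0 R) := by
    have hU : {z | l' < rz a f z} = ⋃ R : ℕ, ({z | l' < rz a f z} ∩ Metric.ball 0 R) := by
      rw [← Set.inter_iUnion, Metric.iUnion_ball_nat, Set.inter_univ]
    rw [hU, Monotone.measure_iUnion] at hlt
    · exact lt_iSup_iff.1 hlt
    · intro i j hij
      exact Set.inter_subset_inter_right _ (Metric.ball_subset_ball (by exact_mod_cast hij))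
  set A := {z | l' < rz a f z} ∩ Metric.ball 0 (R : ℝ) with hA
  have hAm : MeasurableSet A := (measurableSet_lt measurable_const hm).inter measurableSet_ball
  have hA0 : volume A ≠ 0 := (bot_le.trans_lt hR).ne'
  have hAT : volume A ≠ ⊤ :=
    ((measure_mono Set.inter_subset_right).trans_lt measure_ball_lt_top).ne
  have hterm : ∀ j : ℤ, ∫⁻ y in F j, ∫⁻ z in A, ‖z - y‖ₑ ^ (a - n) ≤
      volume A * (2 * C * min ((2 : ℝ≥0∞) ^ ((j : ℝ) * (a / n)))
        ((2 : ℝ≥0∞) ^ ((j : ℝ) + k * (a / n - 1)))) := fun j => by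
    rw [← min_mul_mul_left, ← min_mul_mul_left]
    refine le_min ?_ ?_
    · rw [lintegral_lintegral_swap (by fun_prop)]
      calc ∫⁻ z in A, ∫⁻ y in F j, ‖z - y‖ₑ ^ (a - n)
          ≤ ∫⁻ z in A, C * volume (F j) ^ (a / n) := by
            refine lintegral_mono fun z => ?_
            simp_rw [enorm_sub_rev z]
            exact hker _ _
        _ = volume A * (C * volume (F j) ^ (a / n)) := by
            rw [setLIntegral_const, mul_comm]
        _ ≤ volume A * (C * ((2 : ℝ≥0∞) ^ ((j : ℝ) + 1)) ^ (a / n)) := by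
            gcongr; exact hFv j
        _ ≤ volume A * (C * (2 * (2 : ℝ≥0∞) ^ ((j : ℝ) * (a / n)))) := by
            gcongr
            rw [← ENNReal.rpow_mul, add_mul, ENNReal.rpow_add _ _ (by simp) (by simp), mul_comm]
            gcongr
            nth_rewrite 2 [← ENNReal.rpow_one 2]
            exact ENNReal.rpow_le_rpow_of_exponent_le (by norm_num) (by linarith)
        _ = _ := by ring
    · calc ∫⁻ y in F j, ∫⁻ z in A, ‖z - y‖ₑ ^ (a - n)
          ≤ ∫⁻ y in F j, C * volume A ^ (a / n) := lintegral_mono fun y => hker _ _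
        _ = volume (F j) * (C * (volume A * volume A ^ (a / n - 1))) := by
            rw [setLIntegral_const, mul_comm]
            congr 2
            nth_rewrite 2 [← ENNReal.rpow_one (volume A)]
            rw [← ENNReal.rpow_add _ _ hA0 hAT]
            congr 1; ring
        _ ≤ (2 : ℝ≥0∞) ^ ((j : ℝ) + 1) *
            (C * (volume A * ((2 : ℝ≥0∞) ^ (k : ℝ)) ^ (a / n - 1))) := by
            have := ennreal_rpow_anti hR.le (z := a / n - 1) (by linarith)
            have := hFv j
            gcongr (?_ : ℝ≥0∞) * (C * (volume A * ?_))
        _ = _ := by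
            rw [← ENNReal.rpow_mul, ENNReal.rpow_add _ _ (by simp) (by simp),
              ENNReal.rpow_add _ _ (by simp) (by simp), ENNReal.rpow_one]
            ring
  have hkey : l' * volume A ≤ (2 * C * ∑' j : ℤ, rr f ((2 : ℝ≥0∞) ^ (j : ℝ)) *
        min ((2 : ℝ≥0∞) ^ ((j : ℝ) * (a / n))) ((2 : ℝ≥0∞) ^ ((j : ℝ) + k * (a / n - 1)))) *
        volume A := by
    calc l' * volume A = ∫⁻ z in A, l' := by rw [setLIntegral_const]
      _ ≤ ∫⁻ z in A, rz a f z := setLIntegral_mono hm fun z hz => (show l' < _ from hz.1).le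
      _ = ∫⁻ y, ∫⁻ z in A, ‖z - y‖ₑ ^ (a - n) * f y := by
          unfold rz
          rw [lintegral_lintegral_swap (by fun_prop)]
      _ = ∫⁻ y, f y * ∫⁻ z in A, ‖z - y‖ₑ ^ (a - n) := by
          congr 1 with y
          rw [lintegral_mul_const _ (by fun_prop), mul_comm]
      _ ≤ ∫⁻ y, (∑' j : ℤ, rr f ((2 : ℝ≥0∞) ^ (j : ℝ)) * (F j).indicator 1 y) *
            ∫⁻ z in A, ‖z - y‖ₑ ^ (a - n) := by
          refine lintegral_mono_ae ?_
          filter_upwards [hlayers] with y hy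
          gcongr
      _ = ∫⁻ y, ∑' j : ℤ, rr f ((2 : ℝ≥0∞) ^ (j : ℝ)) *
            (F j).indicator (fun y => ∫⁻ z in A, ‖z - y‖ₑ ^ (a - n)) y := by
          congr 1 with y
          rw [← ENNReal.tsum_mul_right]
          congr 1 with j
          by_cases h : y ∈ F j <;> simp [h]
      _ = ∑' j : ℤ, rr f ((2 : ℝ≥0∞) ^ (j : ℝ)) *
            ∫⁻ y in F j, ∫⁻ z in A, ‖z - y‖ₑ ^ (a - n) := by
          have hKm : Measurable fun y => ∫⁻ z in A, ‖z - y‖ₑ ^ (a - n) := by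
            apply Measurable.lintegral_prod_right'
              (f := fun w : EuclideanSpace ℝ (Fin n) × EuclideanSpace ℝ (Fin n) =>
                ‖w.2 - w.1‖ₑ ^ (a - n))
            fun_prop
          rw [lintegral_tsum fun j => ((hKm.indicator (hFm j)).const_mul _).aemeasurable]
          congr 1 with j
          rw [lintegral_const_mul _ (hKm.indicator (hFm j)), lintegral_indicator (hFm j)]
      _ ≤ ∑' j : ℤ, rr f ((2 : ℝ≥0∞) ^ (j : ℝ)) * (volume A * (2 * C *
            min ((2 : ℝ≥0∞) ^ ((j : ℝ) * (a / n)))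
              ((2 : ℝ≥0∞) ^ ((j : ℝ) + k * (a / n - 1))))) := by
          gcongr with j; exact hterm j
      _ = _ := by
          rw [← ENNReal.tsum_mul_left, ← ENNReal.tsum_mul_right]
          congr 1 with j; ring
  exact (ENNReal.mul_le_mul_iff_left hA0 hAT).1 hkey

/-! ### Inequalities for dyadic sums -/

theorem dS_mono {X : Type*} [MeasureSpace X] {x q : ℝ} (hq : 0 ≤ q) {f g : X → ℝ≥0∞}
    (h : ∀ y, f y ≤ g y) : dS x q f ≤ dS x q g := by
  unfold dS
  gcongr with k
  exact rr_mono h _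

theorem dS_const_mul_le {X : Type*} [MeasureSpace X] {x q : ℝ} (hq : 0 ≤ q) (c : ℝ≥0∞)
    (f : X → ℝ≥0∞) : dS x q (fun y => c * f y) ≤ c ^ q * dS x q f := by
  unfold dS
  rw [← ENNReal.tsum_mul_left]
  refine ENNReal.tsum_le_tsum fun k => ?_
  rw [← ENNReal.mul_rpow_of_nonneg _ _ hq]
  refine ENNReal.rpow_le_rpow ?_ hq
  rw [mul_left_comm]
  gcongr
  exact rr_const_mul_le f _

/-- The embedding of sequence spaces `ℓ^p ⊆ ℓ^q` for `p ≤ q`. -/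
theorem tsum_rpow_le_rpow_tsum {ι : Type*} (f : ι → ℝ≥0∞) {p q : ℝ} (hp : 0 < p) (hpq : p ≤ q) :
    ∑' i, f i ^ q ≤ (∑' i, f i ^ p) ^ (q / p) := by
  set S := ∑' i, f i ^ p with hS
  have h1 : ∀ i, f i ^ q ≤ f i ^ p * S ^ ((q - p) / p) := fun i => by
    have e1 : f i ^ q = f i ^ p * f i ^ (q - p) := by
      rw [← ENNReal.rpow_add_of_nonneg _ _ hp.le (by linarith)]; congr 1; ring
    have e2 : f i ^ (q - p) = (f i ^ p) ^ ((q - p) / p) := by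
      rw [← ENNReal.rpow_mul]; congr 1; field_simp
    rw [e1, e2]
    gcongr
    exact ENNReal.le_tsum i
  calc ∑' i, f i ^ q ≤ ∑' i, f i ^ p * S ^ ((q - p) / p) := by gcongr with i; exact h1 i
    _ = S ^ (1 : ℝ) * S ^ ((q - p) / p) := by rw [ENNReal.tsum_mul_right, ENNReal.rpow_one]
    _ = S ^ (q / p) := by
        rw [← ENNReal.rpow_add_of_nonneg _ _ zero_le_one (div_nonneg (by linarith) hp.le)]
        congr 1; field_simp; ring

theorem dS_le_rpow_dS {X : Type*} [MeasureSpace X] (x : ℝ) {p q : ℝ} (hp : 0 < p) (hpq : p ≤ q)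
    (f : X → ℝ≥0∞) : dS x q f ≤ dS x p f ^ (q / p) :=
  tsum_rpow_le_rpow_tsum _ hp hpq

/-- Young's inequality `‖κ ∗ A‖_q ≤ ‖κ‖_1 ‖A‖_q` on `ℤ`. -/
theorem tsum_conv_rpow_le (κ A : ℤ → ℝ≥0∞) {q : ℝ} (hq : 1 < q) :
    ∑' k, (∑' j, κ (k - j) * A j) ^ q ≤ (∑' m, κ m) ^ q * ∑' j, A j ^ q := by
  set S := ∑' m, κ m with hS
  have hq0 : 0 < q := by linarith
  have hsum1 : ∀ k, ∑' j, κ (k - j) = S := fun k => (Equiv.subLeft k).tsum_eq κ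
  have hsum2 : ∀ j, ∑' k, κ (k - j) = S := fun j => (Equiv.subRight j).tsum_eq κ
  have hconj : (q / (q - 1)).HolderConjugate q := (Real.HolderConjugate.conjExponent hq).symm
  have hk : ∀ k, (∑' j, κ (k - j) * A j) ^ q ≤ S ^ (q - 1) * ∑' j, κ (k - j) * A j ^ q :=
    fun k => by
    have hH := ENNReal.lintegral_mul_le_Lp_mul_Lq (Measure.count : Measure ℤ) hconj
      (f := fun j => κ (k - j) ^ ((q - 1) / q)) (g := fun j => κ (k - j) ^ (1 / q) * A j)
      (Measurable.of_discrete.aemeasurable) (Measurable.of_discrete.aemeasurable)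
    simp only [lintegral_count, Pi.mul_apply] at hH
    have e1 : ∀ j, κ (k - j) ^ ((q - 1) / q) * (κ (k - j) ^ (1 / q) * A j) = κ (k - j) * A j :=
      fun j => by
      rw [← mul_assoc, ← ENNReal.rpow_add_of_nonneg _ _ (div_nonneg (by linarith) hq0.le)
        (by positivity)]
      have : (q - 1) / q + 1 / q = 1 := by field_simp; ring
      rw [this, ENNReal.rpow_one]
    have e2 : ∀ j, (κ (k - j) ^ ((q - 1) / q)) ^ (q / (q - 1)) = κ (k - j) := fun j => by
      have h1 : q - 1 ≠ 0 := by linarith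
      rw [← ENNReal.rpow_mul]
      have : (q - 1) / q * (q / (q - 1)) = 1 := by field_simp
      rw [this, ENNReal.rpow_one]
    have e3 : ∀ j, (κ (k - j) ^ (1 / q) * A j) ^ q = κ (k - j) * A j ^ q := fun j => by
      rw [ENNReal.mul_rpow_of_nonneg _ _ hq0.le, ← ENNReal.rpow_mul]
      have : 1 / q * q = 1 := by field_simp
      rw [this, ENNReal.rpow_one]
    simp_rw [e1, e2, e3, hsum1] at hH
    calc (∑' j, κ (k - j) * A j) ^ q
        ≤ (S ^ (1 / (q / (q - 1))) * (∑' j, κ (k - j) * A j ^ q) ^ (1 / q)) ^ q := by gcongr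
      _ = _ := by
          have h1 : q - 1 ≠ 0 := by linarith
          rw [ENNReal.mul_rpow_of_nonneg _ _ hq0.le, ← ENNReal.rpow_mul, ← ENNReal.rpow_mul]
          have a1 : 1 / (q / (q - 1)) * q = q - 1 := by field_simp
          have a2 : 1 / q * q = 1 := by field_simp
          rw [a1, a2, ENNReal.rpow_one]
  calc ∑' k, (∑' j, κ (k - j) * A j) ^ q
      ≤ ∑' k, S ^ (q - 1) * ∑' j, κ (k - j) * A j ^ q := by gcongr with k; exact hk k
    _ = S ^ (q - 1) * ∑' j, ∑' k, κ (k - j) * A j ^ q := by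
        rw [ENNReal.tsum_mul_left, ENNReal.tsum_comm]
    _ = S ^ (q - 1) * (S ^ (1 : ℝ) * ∑' j, A j ^ q) := by
        simp_rw [ENNReal.tsum_mul_right, hsum2, ENNReal.tsum_mul_left, ENNReal.rpow_one]
    _ = S ^ q * ∑' j, A j ^ q := by
        rw [← mul_assoc, ← ENNReal.rpow_add_of_nonneg _ _ (by linarith) zero_le_one]
        congr 2; ring

theorem tsum_min_rpow_ne_top {y z : ℝ} (hy : 0 < y) (hz : 0 < z) :
    ∑' m : ℤ, min ((2 : ℝ≥0∞) ^ ((m : ℝ) * y)) ((2 : ℝ≥0∞) ^ (-(m : ℝ) * z)) ≠ ⊤ := by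
  have hgeo : ∀ w : ℝ, 0 < w → ∑' m : ℕ, ((2 : ℝ≥0∞) ^ (-w)) ^ m ≠ ⊤ := fun w hw => by
    rw [ENNReal.tsum_geometric]
    refine ENNReal.inv_ne_top.2 (tsub_pos_of_lt ?_).ne'
    exact ENNReal.rpow_lt_one_of_one_lt_of_neg (by norm_num) (by linarith)
  rw [tsum_of_nat_of_neg_add_one ENNReal.summable ENNReal.summable]
  refine ENNReal.add_ne_top.2 ⟨ne_top_of_le_ne_top (hgeo z hz) ?_,
    ne_top_of_le_ne_top (hgeo y hy) ?_⟩
  · gcongr with m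
    refine (min_le_right _ _).trans_eq ?_
    rw [← ENNReal.rpow_natCast, ← ENNReal.rpow_mul]
    congr 1; push_cast; ring
  · gcongr with m
    refine (min_le_left _ _).trans ?_
    rw [← ENNReal.rpow_natCast, ← ENNReal.rpow_mul]
    refine ENNReal.rpow_le_rpow_of_exponent_le (by norm_num) ?_
    push_cast; nlinarith

/-- The Hardy–Littlewood–Sobolev inequality in Lorentz spaces, from `L^{1/x,q}` to
`L^{1/(x - a/n),q}` for `a / n < x < 1`. After weighting, the bound on the rearrangement is a
convolution on `ℤ` with the kernel `min (2 ^ (m (x - a/n))) (2 ^ (-m (1 - x)))`, summable because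
both `x - a/n` and `1 - x` are positive. -/
theorem dS_rz_le {n : ℕ} (hn : 0 < n) {a : ℝ} (ha : 0 < a) (han : a < n) {x q : ℝ}
    (hax : a / n < x) (hx : x < 1) (hq : 1 < q) :
    ∃ C : ℝ≥0∞, C ≠ ⊤ ∧ ∀ f : EuclideanSpace ℝ (Fin n) → ℝ≥0∞, Measurable f →
      dS (x - a / n) q (rz a f) ≤ C * dS x q f := by
  obtain ⟨C, hC, hrr⟩ := rr_rz_le hn ha han
  have hn' : (0 : ℝ) < n := by exact_mod_cast hn
  have hx0 : 0 < x := lt_trans (by positivity) hax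
  have hq0 : 0 < q := by linarith
  have hκ := tsum_min_rpow_ne_top (sub_pos.2 hax) (sub_pos.2 hx)
  set κ : ℤ → ℝ≥0∞ := fun m =>
    min ((2 : ℝ≥0∞) ^ ((m : ℝ) * (x - a / n))) ((2 : ℝ≥0∞) ^ (-(m : ℝ) * (1 - x))) with hκdef
  have hCtop : C ^ q * ((∑' m, κ m) ^ q + 1) ≠ ⊤ :=
    ENNReal.mul_ne_top (ENNReal.rpow_ne_top_of_nonneg hq0.le hC)
      (ENNReal.add_ne_top.2 ⟨ENNReal.rpow_ne_top_of_nonneg hq0.le hκ, by simp⟩)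
  -- the added ones keep the constant nonzero, which makes the case `dS x q f = ⊤` trivial
  refine ⟨C ^ q * ((∑' m, κ m) ^ q + 1) + 1, ENNReal.add_ne_top.2 ⟨hCtop, by simp⟩,
    fun f hf => ?_⟩
  rcases eq_or_ne (dS x q f) ⊤ with hT | hT
  · rw [hT, ENNReal.mul_top (by simp)]; exact le_top
  have hterm : ∀ k : ℤ, (2 : ℝ≥0∞) ^ ((k : ℝ) * (x - a / n)) *
      rr (rz a f) ((2 : ℝ≥0∞) ^ (k : ℝ)) ≤
      C * ∑' j : ℤ, κ (k - j) * ((2 : ℝ≥0∞) ^ ((j : ℝ) * x) * rr f ((2 : ℝ≥0∞) ^ (j : ℝ))) :=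
    fun k => by
    calc (2 : ℝ≥0∞) ^ ((k : ℝ) * (x - a / n)) * rr (rz a f) ((2 : ℝ≥0∞) ^ (k : ℝ))
        ≤ (2 : ℝ≥0∞) ^ ((k : ℝ) * (x - a / n)) * (C * ∑' j : ℤ, rr f ((2 : ℝ≥0∞) ^ (j : ℝ)) *
        min ((2 : ℝ≥0∞) ^ ((j : ℝ) * (a / n))) ((2 : ℝ≥0∞) ^ ((j : ℝ) + k * (a / n - 1)))) := by
          gcongr; exact hrr x q hx0 hq0 f hf hT k
      _ = _ := by
          rw [mul_left_comm, ← ENNReal.tsum_mul_left]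
          congr 2 with j
          rw [mul_left_comm, ← min_mul_mul_left, ← mul_assoc, mul_comm]
          congr 1
          rw [hκdef]
          simp only
          rw [← min_mul_mul_right]
          simp_rw [← ENNReal.rpow_add _ _ (two_ne_zero) (ENNReal.ofNat_ne_top)]
          congr 2 <;> push_cast <;> ring
  calc dS (x - a / n) q (rz a f)
      ≤ ∑' k : ℤ, (C * ∑' j : ℤ, κ (k - j) *
          ((2 : ℝ≥0∞) ^ ((j : ℝ) * x) * rr f ((2 : ℝ≥0∞) ^ (j : ℝ)))) ^ q := by
        unfold dS; exact ENNReal.tsum_le_tsum fun k => ENNReal.rpow_le_rpow (hterm k) hq0.le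
    _ = C ^ q * ∑' k : ℤ, (∑' j : ℤ, κ (k - j) *
          ((2 : ℝ≥0∞) ^ ((j : ℝ) * x) * rr f ((2 : ℝ≥0∞) ^ (j : ℝ)))) ^ q := by
        simp_rw [ENNReal.mul_rpow_of_nonneg _ _ hq0.le]; rw [ENNReal.tsum_mul_left]
    _ ≤ C ^ q * ((∑' m, κ m) ^ q * dS x q f) := by
        gcongr; exact tsum_conv_rpow_le κ _ hq
    _ ≤ _ := by
        rw [← mul_assoc]
        gcongr
        exact (mul_le_mul_right le_self_add _).trans le_self_add

/-- Hölder's inequality with the weight `|x| ^ (-b)` of weak `L^{n/b}`: if `u` is in `L^{1/x,pq}`,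
then `|x| ^ (-b) u ^ p` is in `L^{1/(p x + b/n),q}`. Outside a ball of measure `2 ^ k` and a
superlevel set of `u` of measure at most `2 ^ k`, both factors are controlled; the exceptional
set has measure at most `2 ^ (k + 1)`, hence the shift of the index by one. -/
theorem dS_weight_rpow_le {n : ℕ} (hn : 0 < n) {b p q x : ℝ} (hb : 0 < b) (hp : 0 < p)
    (hq : 0 < q) :
    ∃ C : ℝ≥0∞, C ≠ ⊤ ∧ ∀ u : EuclideanSpace ℝ (Fin n) → ℝ≥0∞,
      dS (p * x + b / n) q (fun y => ENNReal.ofReal (‖y‖ ^ (-b)) * u y ^ p) ≤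
        C * dS x (p * q) u := by
  have hn' : (0 : ℝ) < n := by exact_mod_cast hn
  have : Nonempty (Fin n) := ⟨⟨0, hn⟩⟩
  set c := (volume (Metric.ball (0 : EuclideanSpace ℝ (Fin n)) 1)).toReal with hc
  have hc0 : 0 < c := ENNReal.toReal_pos (Metric.measure_ball_pos _ _ one_pos).ne'
    measure_ball_lt_top.ne
  have hcv : volume (Metric.ball (0 : EuclideanSpace ℝ (Fin n)) 1) = ENNReal.ofReal c :=
    (ENNReal.ofReal_toReal measure_ball_lt_top.ne).symm
  set D : ℝ≥0∞ := (2 : ℝ≥0∞) ^ (p * x + b / n) * ENNReal.ofReal (c ^ (b / n)) with hD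
  have hDtop : D ≠ ⊤ := ENNReal.mul_ne_top
    (by apply ENNReal.rpow_ne_top_of_ne_zero <;> simp) ENNReal.ofReal_ne_top
  refine ⟨D ^ q, ENNReal.rpow_ne_top_of_nonneg hq.le hDtop, fun u => ?_⟩
  have hofR : ∀ w : ℝ, ENNReal.ofReal ((2 : ℝ) ^ w) = (2 : ℝ≥0∞) ^ w := fun w => by
    rw [← ENNReal.ofReal_rpow_of_pos two_pos]; simp
  have hrr : ∀ k : ℤ, rr (fun y => ENNReal.ofReal (‖y‖ ^ (-b)) * u y ^ p)
      ((2 : ℝ≥0∞) ^ ((k : ℝ) + 1)) ≤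
      ENNReal.ofReal (c ^ (b / n)) * (2 : ℝ≥0∞) ^ (-((k : ℝ) * (b / n))) *
        rr u ((2 : ℝ≥0∞) ^ (k : ℝ)) ^ p := fun k => by
    -- the ball of volume `2 ^ k`
    set ρ : ℝ := ((2 : ℝ) ^ (k : ℝ) / c) ^ (1 / (n : ℝ)) with hρ
    have hρ0 : 0 < ρ := by positivity
    have hvol : volume (Metric.ball (0 : EuclideanSpace ℝ (Fin n)) ρ) = (2 : ℝ≥0∞) ^ (k : ℝ) := by
      rw [Measure.addHaar_ball _ _ hρ0.le, finrank_euclideanSpace_fin, hcv,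
        ← ENNReal.ofReal_mul (by positivity), hρ, ← Real.rpow_natCast, ← Real.rpow_mul
        (by positivity), ← hofR]
      congr 1
      rw [one_div_mul_cancel hn'.ne', Real.rpow_one]; field_simp
    have hρb : ENNReal.ofReal (ρ ^ (-b)) =
        ENNReal.ofReal (c ^ (b / n)) * (2 : ℝ≥0∞) ^ (-((k : ℝ) * (b / n))) := by
      rw [← hofR, ← ENNReal.ofReal_mul (by positivity), hρ, ← Real.rpow_mul (by positivity),
        Real.div_rpow (by positivity) hc0.le, ← Real.rpow_mul two_pos.le]
      congr 1
      rw [div_eq_mul_inv, ← Real.rpow_neg hc0.le, mul_comm]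
      congr 2 <;> field_simp
    rw [← hρb]
    refine rr_le ?_
    have hsub : {y | ENNReal.ofReal (ρ ^ (-b)) * rr u ((2 : ℝ≥0∞) ^ (k : ℝ)) ^ p <
        ENNReal.ofReal (‖y‖ ^ (-b)) * u y ^ p} ⊆
        Metric.ball 0 ρ ∪ {y | rr u ((2 : ℝ≥0∞) ^ (k : ℝ)) < u y} := fun y hy => by
      rw [Set.mem_ofPred_eq] at hy
      by_contra hc
      simp only [Set.mem_union, mem_ball_zero_iff, Set.mem_ofPred_eq, not_or, not_lt] at hc
      refine absurd hy (not_lt.2 ?_)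
      have h1 : ‖y‖ ^ (-b) ≤ ρ ^ (-b) :=
        Real.rpow_le_rpow_of_nonpos hρ0 hc.1 (by linarith)
      have h2 := hc.2
      gcongr
    refine (measure_mono hsub).trans ((measure_union_le _ _).trans ?_)
    rw [hvol, ENNReal.rpow_add _ _ (by simp) (by simp), ENNReal.rpow_one, mul_two]
    gcongr
    exact volume_rr_lt_le _ _
  unfold dS
  rw [← (Equiv.addRight (1 : ℤ)).tsum_eq, ← ENNReal.tsum_mul_left]
  refine ENNReal.tsum_le_tsum fun k => ?_
  rw [ENNReal.rpow_mul ((2 : ℝ≥0∞) ^ ((k : ℝ) * x) * rr u _) p q,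
    ← ENNReal.mul_rpow_of_nonneg _ _ hq.le]
  refine ENNReal.rpow_le_rpow ?_ hq.le
  have hk1 : ((Equiv.addRight (1 : ℤ) k : ℤ) : ℝ) = (k : ℝ) + 1 := by simp
  rw [hk1]
  calc (2 : ℝ≥0∞) ^ (((k : ℝ) + 1) * (p * x + b / n)) *
        rr (fun y => ENNReal.ofReal (‖y‖ ^ (-b)) * u y ^ p) ((2 : ℝ≥0∞) ^ ((k : ℝ) + 1))
      ≤ (2 : ℝ≥0∞) ^ (((k : ℝ) + 1) * (p * x + b / n)) *
        (ENNReal.ofReal (c ^ (b / n)) * (2 : ℝ≥0∞) ^ (-((k : ℝ) * (b / n))) *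
        rr u ((2 : ℝ≥0∞) ^ (k : ℝ)) ^ p) := by gcongr; exact hrr k
    _ = ENNReal.ofReal (c ^ (b / n)) * ((2 : ℝ≥0∞) ^ (((k : ℝ) + 1) * (p * x + b / n)) *
        (2 : ℝ≥0∞) ^ (-((k : ℝ) * (b / n)))) * rr u ((2 : ℝ≥0∞) ^ (k : ℝ)) ^ p := by ring
    _ = ENNReal.ofReal (c ^ (b / n)) * ((2 : ℝ≥0∞) ^ (p * x + b / n) *
        (2 : ℝ≥0∞) ^ ((k : ℝ) * x * p)) * rr u ((2 : ℝ≥0∞) ^ (k : ℝ)) ^ p := by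
        rw [← ENNReal.rpow_add _ _ (by simp) (by simp),
          ← ENNReal.rpow_add _ _ (by simp) (by simp)]
        congr 3; ring
    _ = D * ((2 : ℝ≥0∞) ^ ((k : ℝ) * x) * rr u ((2 : ℝ≥0∞) ^ (k : ℝ))) ^ p := by
        rw [ENNReal.mul_rpow_of_nonneg _ _ hp.le, ← ENNReal.rpow_mul, hD]; ring

/-! ### Comparison of dyadic sums with the Lorentz quasinorm -/

theorem ofReal_two_zpow (k : ℤ) : ENNReal.ofReal ((2 : ℝ) ^ k) = (2 : ℝ≥0∞) ^ (k : ℝ) := by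
  rw [← Real.rpow_intCast, ← ENNReal.ofReal_rpow_of_pos two_pos]; simp

theorem Ioi_eq_iUnion_dyadic : Set.Ioi (0 : ℝ) =
    ⋃ k : ℤ, Set.Ico ((2 : ℝ) ^ k) ((2 : ℝ) ^ (k + 1)) := by
  ext t
  simp only [Set.mem_Ioi, Set.mem_iUnion]
  refine ⟨fun ht => exists_mem_Ico_zpow ht one_lt_two, fun ⟨k, hk⟩ => ?_⟩
  exact lt_of_lt_of_le (by positivity) hk.1

/-- The real-valued rearrangement is at most the one with values in `ℝ≥0∞`, without any
assumption on `f`: where no level is admissible, the infimum over the empty set of reals is `0`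
and the right side is `⊤`. -/
theorem ofReal_rearr_le {n : ℕ} (f : EuclideanSpace ℝ (Fin n) → ℂ) (t : ℝ) :
    ENNReal.ofReal (rearr f t) ≤ rr (fun x => ‖f x‖ₑ) (ENNReal.ofReal t) := by
  refine le_sInf fun l hl => ?_
  rcases eq_or_ne l ⊤ with rfl | hT
  · exact le_top
  lift l to NNReal using hT
  rw [Set.mem_ofPred_eq] at hl
  have h1 : ∀ ε > 0, rearr f t ≤ l + ε := fun ε hε => by
    refine csInf_le ⟨0, fun x hx => hx.1.le⟩ ⟨by positivity, (measure_mono ?_).trans hl⟩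
    intro x hx
    rw [Set.mem_ofPred_eq] at hx ⊢
    show (l : ℝ≥0∞) < ‖f x‖ₑ
    rw [enorm_eq_nnnorm, ENNReal.coe_lt_coe, ← NNReal.coe_lt_coe, coe_nnnorm]
    linarith
  exact ENNReal.ofReal_le_of_le_toReal (le_of_forall_pos_le_add h1)

/-- The reverse comparison of rearrangements. Boundedness of `f` guarantees an admissible level, so
that the infimum of reals is not that of the empty set. -/
theorem rr_le_ofReal_rearr {n : ℕ} (f : EuclideanSpace ℝ (Fin n) → ℂ) {M : ℝ}
    (hM : ∀ x, ‖f x‖ ≤ M) (t : ℝ) :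
    rr (fun x => ‖f x‖ₑ) (ENNReal.ofReal t) ≤ ENNReal.ofReal (rearr f t) := by
  have hne : {l : ℝ | 0 < l ∧ distFn f l ≤ ENNReal.ofReal t}.Nonempty := by
    refine ⟨|M| + 1, by positivity, ?_⟩
    have : {x | |M| + 1 < ‖f x‖} = ∅ := by
      ext x
      simp only [Set.mem_ofPred_eq, Set.mem_empty_iff_false, iff_false, not_lt]
      linarith [hM x, le_abs_self M]
    rw [distFn, this]; simp
  have hlt : ∀ ε > 0, rr (fun x => ‖f x‖ₑ) (ENNReal.ofReal t) ≤
      ENNReal.ofReal (rearr f t + ε) := fun ε hε => by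
    obtain ⟨l, hl, hlt⟩ := exists_lt_of_csInf_lt hne
      (show rearr f t < rearr f t + ε by linarith)
    refine (rr_le ((measure_mono ?_).trans hl.2)).trans (ENNReal.ofReal_le_ofReal hlt.le)
    intro x hx
    rw [Set.mem_ofPred_eq] at hx ⊢
    rw [← ofReal_norm] at hx
    exact (ENNReal.ofReal_lt_ofReal_iff_of_nonneg hl.1.le).1 hx
  have h0 : 0 ≤ rearr f t := Real.sInf_nonneg fun l hl => hl.1.le
  refine ENNReal.le_of_forall_pos_le_add fun ε hε _ => ?_
  refine (hlt ε (by exact_mod_cast hε)).trans ?_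
  rw [ENNReal.ofReal_add h0 ε.coe_nonneg]; simp

theorem rearr_nonneg {n : ℕ} (f : EuclideanSpace ℝ (Fin n) → ℂ) (t : ℝ) : 0 ≤ rearr f t :=
  Real.sInf_nonneg fun _ hl => hl.1.le

/-- On `[2 ^ k, 2 ^ (k + 1))` the integrand is at most its value with `f*` taken at the left end
and `t ^ (1 / p)` at the right end. -/
theorem lorentz_le_dS {n : ℕ} {p q : ℝ} (hp : 0 < p) (hq : 0 < q)
    (f : EuclideanSpace ℝ (Fin n) → ℂ) :
    lorentz p (ENNReal.ofReal q) f ≤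
      (2 : ℝ≥0∞) ^ (1 / p) * dS (1 / p) q (fun x => ‖f x‖ₑ) ^ (1 / q) := by
  rw [lorentz, if_neg ENNReal.ofReal_ne_top, ENNReal.toReal_ofReal hq.le]
  have hkey : ∫⁻ t in Set.Ioi (0 : ℝ),
      ENNReal.ofReal (t ^ (1 / p) * rearr f t) ^ q / ENNReal.ofReal t ≤
      ((2 : ℝ≥0∞) ^ (1 / p)) ^ q * dS (1 / p) q (fun x => ‖f x‖ₑ) := by
    rw [Ioi_eq_iUnion_dyadic]
    refine (lintegral_iUnion_le _ _).trans ?_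
    unfold dS
    rw [← ENNReal.tsum_mul_left]
    refine ENNReal.tsum_le_tsum fun k => ?_
    have h2k : (0 : ℝ) < 2 ^ k := by positivity
    calc ∫⁻ t in Set.Ico ((2 : ℝ) ^ k) ((2 : ℝ) ^ (k + 1)),
          ENNReal.ofReal (t ^ (1 / p) * rearr f t) ^ q / ENNReal.ofReal t
        ≤ ∫⁻ t in Set.Ico ((2 : ℝ) ^ k) ((2 : ℝ) ^ (k + 1)),
          (((2 : ℝ≥0∞) ^ (1 / p)) * ((2 : ℝ≥0∞) ^ ((k : ℝ) * (1 / p)) *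
            rr (fun x => ‖f x‖ₑ) ((2 : ℝ≥0∞) ^ (k : ℝ)))) ^ q / ENNReal.ofReal (2 ^ k) := by
          refine setLIntegral_mono measurable_const fun t ht => ?_
          have ht0 : 0 < t := h2k.trans_le ht.1
          refine ENNReal.div_le_div (ENNReal.rpow_le_rpow ?_ hq.le)
            (ENNReal.ofReal_le_ofReal ht.1)
          rw [ENNReal.ofReal_mul (by positivity), ← mul_assoc]
          refine mul_le_mul' ?_ ?_
          · rw [← ENNReal.ofReal_rpow_of_pos ht0, ENNReal.rpow_mul,
              ← ENNReal.mul_rpow_of_nonneg _ _ (by positivity), ← ofReal_two_zpow]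
            refine ENNReal.rpow_le_rpow ?_ (by positivity)
            refine (ENNReal.ofReal_le_ofReal ht.2.le).trans_eq ?_
            rw [zpow_add_one₀ two_ne_zero, mul_comm, ENNReal.ofReal_mul two_pos.le]; simp
          · refine (ofReal_rearr_le f t).trans (rr_anti _ ?_)
            rw [← ofReal_two_zpow]
            exact ENNReal.ofReal_le_ofReal ht.1
      _ = (((2 : ℝ≥0∞) ^ (1 / p)) * ((2 : ℝ≥0∞) ^ ((k : ℝ) * (1 / p)) *
            rr (fun x => ‖f x‖ₑ) ((2 : ℝ≥0∞) ^ (k : ℝ)))) ^ q := by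
          rw [setLIntegral_const, Real.volume_Ico]
          have : (2 : ℝ) ^ (k + 1) - 2 ^ k = 2 ^ k := by
            rw [zpow_add_one₀ two_ne_zero]; ring
          rw [this, ENNReal.div_mul_cancel (by simpa using h2k) ENNReal.ofReal_ne_top]
      _ = _ := by rw [ENNReal.mul_rpow_of_nonneg _ _ hq.le]
  refine (ENNReal.rpow_le_rpow hkey (by positivity)).trans_eq ?_
  rw [ENNReal.mul_rpow_of_nonneg _ _ (by positivity), ← ENNReal.rpow_mul]
  have : q * (1 / q) = 1 := by field_simp
  rw [this, ENNReal.rpow_one]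

/-- The converse of `lorentz_le_dS` for bounded functions and second exponent `2`: on
`[2 ^ k, 2 ^ (k + 1))` the integrand is bounded below with `f*` taken at the right end, so the
`(k + 1)`-st term of the sum is compared with the `k`-th interval. -/
theorem dS_two_le_lorentz {n : ℕ} {p : ℝ} (hp : 0 < p)
    (f : EuclideanSpace ℝ (Fin n) → ℂ) {M : ℝ} (hM : ∀ x, ‖f x‖ ≤ M) :
    dS (1 / p) 2 (fun x => ‖f x‖ₑ) ≤
      2 * ((2 : ℝ≥0∞) ^ (1 / p)) ^ (2 : ℝ) * lorentz p 2 f ^ (2 : ℝ) := by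
  rw [lorentz, if_neg (by simp), ENNReal.toReal_ofNat, ← ENNReal.rpow_mul _ (1 / 2) 2]
  have h12 : 1 / 2 * (2 : ℝ) = 1 := by norm_num
  rw [h12, ENNReal.rpow_one, Ioi_eq_iUnion_dyadic]
  have hdisj : Pairwise (Function.onFun Disjoint
      fun k : ℤ => Set.Ico ((2 : ℝ) ^ k) ((2 : ℝ) ^ (k + 1))) := by
    have := (zpow_right_strictMono₀ (one_lt_two (α := ℝ))).monotone.pairwise_disjoint_on_Ico_succ
    simpa using this
  rw [lintegral_iUnion (fun _ => measurableSet_Ico) hdisj, ← ENNReal.tsum_mul_left]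
  unfold dS
  rw [← (Equiv.addRight (1 : ℤ)).tsum_eq]
  refine ENNReal.tsum_le_tsum fun k => ?_
  have h2k : (0 : ℝ) < 2 ^ k := by positivity
  have h2k1 : (2 : ℝ) ^ (k + 1) = 2 * 2 ^ k := by rw [zpow_add_one₀ two_ne_zero]; ring
  set c : ℝ≥0∞ := ((2 : ℝ≥0∞) ^ ((k : ℝ) * (1 / p)) *
    rr (fun x => ‖f x‖ₑ) ((2 : ℝ≥0∞) ^ ((k : ℝ) + 1))) with hc
  have hlow : c ^ (2 : ℝ) ≤ 2 * ∫⁻ t in Set.Ico ((2 : ℝ) ^ k) ((2 : ℝ) ^ (k + 1)),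
      ENNReal.ofReal (t ^ (1 / p) * rearr f t) ^ (2 : ℝ) / ENNReal.ofReal t := by
    calc c ^ (2 : ℝ) = 2 * ∫⁻ t in Set.Ico ((2 : ℝ) ^ k) ((2 : ℝ) ^ (k + 1)),
          c ^ (2 : ℝ) / ENNReal.ofReal (2 ^ (k + 1)) := by
          rw [setLIntegral_const, Real.volume_Ico]
          have : (2 : ℝ) ^ (k + 1) - 2 ^ k = 2 ^ k := by rw [h2k1]; ring
          rw [this, mul_left_comm, h2k1, ENNReal.ofReal_mul two_pos.le, ENNReal.ofReal_ofNat,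
            ENNReal.div_mul_cancel]
          · simpa using h2k
          · exact ENNReal.mul_ne_top (by simp) ENNReal.ofReal_ne_top
      _ ≤ _ := by
          gcongr 2 * ?_
          refine setLIntegral_mono' measurableSet_Ico fun t ht => ?_
          have ht0 : 0 < t := h2k.trans_le ht.1
          refine ENNReal.div_le_div (ENNReal.rpow_le_rpow ?_ (by norm_num))
            (ENNReal.ofReal_le_ofReal ht.2.le)
          rw [ENNReal.ofReal_mul (by positivity), hc]
          refine mul_le_mul' ?_ ?_
          · rw [← ENNReal.ofReal_rpow_of_pos ht0, ENNReal.rpow_mul, ← ofReal_two_zpow]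
            exact ENNReal.rpow_le_rpow (ENNReal.ofReal_le_ofReal ht.1) (by positivity)
          · refine le_trans (rr_anti _ ?_) (rr_le_ofReal_rearr f hM t)
            have : (k : ℝ) + 1 = ((k + 1 : ℤ) : ℝ) := by push_cast; rfl
            rw [this, ← ofReal_two_zpow]
            exact ENNReal.ofReal_le_ofReal ht.2.le
  have hk1 : ((Equiv.addRight (1 : ℤ) k : ℤ) : ℝ) = (k : ℝ) + 1 := by simp
  rw [hk1]
  calc ((2 : ℝ≥0∞) ^ (((k : ℝ) + 1) * (1 / p)) *
        rr (fun x => ‖f x‖ₑ) ((2 : ℝ≥0∞) ^ ((k : ℝ) + 1))) ^ (2 : ℝ)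
      = ((2 : ℝ≥0∞) ^ (1 / p)) ^ (2 : ℝ) * c ^ (2 : ℝ) := by
        rw [← ENNReal.mul_rpow_of_nonneg _ _ (by norm_num), hc, ← mul_assoc,
          ← ENNReal.rpow_add _ _ (by simp) (by simp)]
        congr 3; ring
    _ ≤ ((2 : ℝ≥0∞) ^ (1 / p)) ^ (2 : ℝ) * _ := mul_le_mul' le_rfl hlow
    _ = _ := by ring

/-! ### A Schwartz function as a Riesz potential of its fractional Laplacian -/

/-- The multiplication formula for the Fourier transform, applied to a modulated Gaussian. -/
theorem gaussian_pairing {n : ℕ} {h : EuclideanSpace ℝ (Fin n) → ℂ} (hh : Integrable h)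
    {c : ℝ} (hc : 0 < c) (x : EuclideanSpace ℝ (Fin n)) :
    ∫ w, Complex.exp (-(c : ℂ) * ‖w‖ ^ 2 + 2 * π * Complex.I * (inner ℝ x w : ℝ)) * h w =
      ∫ y, ((π / c : ℂ) ^ ((n : ℂ) / 2) * Complex.exp (-(π : ℂ) ^ 2 * ‖x - y‖ ^ 2 / c)) *
        𝓕⁻ h y := by
  set M : EuclideanSpace ℝ (Fin n) → ℂ := fun w =>
    Complex.exp (-(c : ℂ) * ‖w‖ ^ 2 + 2 * π * Complex.I * (inner ℝ x w : ℝ)) with hM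
  have hMi : Integrable M :=
    GaussianFourier.integrable_cexp_neg_mul_sq_norm_add (by simpa using hc) _ _
  have hMc : Continuous M := by fun_prop
  have hFM : 𝓕 M = fun y => (π / c : ℂ) ^ ((n : ℂ) / 2) *
      Complex.exp (-(π : ℂ) ^ 2 * ‖x - y‖ ^ 2 / c) := by
    ext y
    rw [hM, fourier_gaussian_innerProductSpace' (by simpa using hc), finrank_euclideanSpace_fin]
  have hFMi : Integrable (𝓕 M) := by
    rw [hFM]
    refine Integrable.const_mul ?_ _
    have h1 := GaussianFourier.integrable_cexp_neg_mul_sq_norm_add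
      (V := EuclideanSpace ℝ (Fin n)) (b := (π : ℂ) ^ 2 / c)
      (by rw [← Complex.ofReal_pow, ← Complex.ofReal_div, Complex.ofReal_re]; positivity) 0 0
    refine (h1.comp_sub_left x).congr (Filter.Eventually.of_forall fun y => ?_)
    simp only
    congr 1
    ring
  have hinv : 𝓕⁻ (𝓕 M) = M := hMc.fourierInv_fourier_eq hMi hFMi
  have hflip := VectorFourier.integral_fourierIntegral_smul_eq_flip
    (L := -innerₗ (EuclideanSpace ℝ (Fin n))) (μ := volume) (ν := volume)
    Real.continuous_fourierChar (by
      have : Continuous fun p : EuclideanSpace ℝ (Fin n) × EuclideanSpace ℝ (Fin n) =>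
        inner ℝ p.1 p.2 := continuous_inner
      exact this.neg) hFMi hh
  have e1 : ∀ ξ, VectorFourier.fourierIntegral 𝐞 volume
      (-innerₗ (EuclideanSpace ℝ (Fin n))) (𝓕 M) ξ = M ξ := fun ξ => by
    rw [← hinv, Real.fourierInv_eq]
    simp [VectorFourier.fourierIntegral, hinv]
  have e2 : ∀ ξ, VectorFourier.fourierIntegral 𝐞 volume
      (-innerₗ (EuclideanSpace ℝ (Fin n))).flip h ξ = 𝓕⁻ h ξ := fun ξ => by
    rw [Real.fourierInv_eq]
    simp [VectorFourier.fourierIntegral, real_inner_comm]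
  simp_rw [e1, e2, smul_eq_mul, hFM] at hflip
  exact hflip

theorem integrableOn_rpow_mul_exp_neg_mul {β A : ℝ} (hβ : 0 < β) (hA : 0 < A) :
    IntegrableOn (fun t : ℝ => t ^ (β - 1) * Real.exp (-(A * t))) (Set.Ioi 0) := by
  refine Integrable.of_integral_ne_zero ?_
  rw [Real.integral_rpow_mul_exp_neg_mul_Ioi hβ hA]
  have := Real.Gamma_pos_of_pos hβ
  positivity

/-- The superposition of heat kernels that yields a power `A ^ (-β)`; the substitution
`c ↦ 1 / c` turns it into a Gamma integral. -/
theorem lintegral_heat {β A : ℝ} (hβ : 0 < β) (hA : 0 < A) :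
    ∫⁻ c in Set.Ioi (0 : ℝ), ENNReal.ofReal (c ^ (-β - 1) * Real.exp (-(A / c))) =
      ENNReal.ofReal ((1 / A) ^ β * Real.Gamma β) := by
  set f : ℝ → ℝ := fun t => t ^ (β - 1) * Real.exp (-(A * t)) with hf
  have hi := integrableOn_rpow_mul_exp_neg_mul hβ hA
  have hne : (-1 : ℝ) ≠ 0 := by norm_num
  have hcongr : ∀ c ∈ Set.Ioi (0 : ℝ), c ^ ((-1 : ℝ) - 1) • f (c ^ (-1 : ℝ)) =
      c ^ (-β - 1) * Real.exp (-(A / c)) := fun c hc => by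
    have hc' : 0 < c := hc
    simp only [hf, smul_eq_mul]
    rw [← Real.rpow_mul hc'.le, ← mul_assoc, ← Real.rpow_add hc',
      Real.rpow_neg_one, ← div_eq_mul_inv]
    congr 2; ring
  have h1 : IntegrableOn (fun c : ℝ => c ^ (-β - 1) * Real.exp (-(A / c))) (Set.Ioi 0) :=
    (integrableOn_congr_fun hcongr measurableSet_Ioi).1
      ((integrableOn_Ioi_comp_rpow_iff' f hne).2 hi)
  have h2 : ∫ c in Set.Ioi (0 : ℝ), c ^ (-β - 1) * Real.exp (-(A / c)) =
      (1 / A) ^ β * Real.Gamma β := by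
    rw [← Real.integral_rpow_mul_exp_neg_mul_Ioi hβ hA, ← integral_comp_rpow_Ioi f hne,
      ← setIntegral_congr_fun measurableSet_Ioi hcongr]
    simp
  rw [← h2, ofReal_integral_eq_lintegral_ofReal h1]
  exact (ae_restrict_iff' measurableSet_Ioi).2 (Filter.Eventually.of_forall fun c hc => by
    have hc' : 0 < c := hc
    positivity)

/-- The symbol grows at most like `1 + |ξ|` as `s ≤ 1`, and `𝓕 u` is a Schwartz function. -/
theorem integrable_symbol_mul_fourier {n : ℕ} {s : ℝ} (hs : 0 < s) (hs1 : s ≤ 1)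
    (u : SchwartzMap (EuclideanSpace ℝ (Fin n)) ℂ) :
    Integrable fun ξ => ((‖ξ‖ ^ s : ℝ) : ℂ) * 𝓕 (⇑u) ξ := by
  rw [← SchwartzMap.fourier_coe]
  have h1 := (𝓕 u).integrable (μ := volume)
  have h2 := (𝓕 u).integrable_pow_mul volume 1
  have hcs : Continuous fun ξ : EuclideanSpace ℝ (Fin n) => ((‖ξ‖ ^ s : ℝ) : ℂ) :=
    Complex.continuous_ofReal.comp (continuous_norm.rpow_const fun _ => Or.inr hs.le)
  refine (h1.norm.add h2).mono' (hcs.mul (𝓕 u).continuous).aestronglyMeasurable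
    (Filter.Eventually.of_forall fun ξ => ?_)
  rw [norm_mul, Complex.norm_real, Real.norm_of_nonneg (by positivity)]
  have h3 : ‖ξ‖ ^ s ≤ 1 + ‖ξ‖ := by
    rcases le_total ‖ξ‖ 1 with h | h
    · exact (Real.rpow_le_one (norm_nonneg _) h hs.le).trans (by simp)
    · exact (Real.rpow_le_rpow_of_exponent_le h hs1).trans (by simp)
  simp only [Pi.add_apply, pow_one]
  nlinarith [norm_nonneg (𝓕 u ξ)]

theorem continuous_fracLap {n : ℕ} {s : ℝ} (hs : 0 < s) (hs1 : s ≤ 1)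
    (u : SchwartzMap (EuclideanSpace ℝ (Fin n)) ℂ) : Continuous (fracLap s (⇑u)) := by
  rw [fracLap]
  have := VectorFourier.fourierIntegral_continuous (μ := volume)
    (L := -innerₗ (EuclideanSpace ℝ (Fin n))) Real.continuous_fourierChar (by
    have : Continuous fun p : EuclideanSpace ℝ (Fin n) × EuclideanSpace ℝ (Fin n) =>
      inner ℝ p.1 p.2 := continuous_inner
    exact this.neg) (integrable_symbol_mul_fourier hs hs1 u)
  exact this

theorem norm_fracLap_le {n : ℕ} {s : ℝ} (u : SchwartzMap (EuclideanSpace ℝ (Fin n)) ℂ)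
    (x : EuclideanSpace ℝ (Fin n)) :
    ‖fracLap s (⇑u) x‖ ≤ ∫ ξ, ‖((‖ξ‖ ^ s : ℝ) : ℂ) * 𝓕 (⇑u) ξ‖ := by
  rw [fracLap, Real.fourierInv_eq]
  refine (norm_integral_le_integral_norm _).trans_eq ?_
  simp_rw [Circle.norm_smul]

/-- Fourier inversion for `u`, with the factor `1 = |w| ^ (-s) |w| ^ s` inserted and the negative
power written as the Gamma integral of `c ^ (s/2 - 1) exp (-c |w| ^ 2)` over `c > 0`, divided by
`Γ(s/2)`. For each `c` the inner integral pairs a Gaussian with `|w| ^ s 𝓕 u w`. -/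
theorem heat_superposition {n : ℕ} {s : ℝ} (hn : 0 < n) (hs : 0 < s)
    (u : SchwartzMap (EuclideanSpace ℝ (Fin n)) ℂ) (x : EuclideanSpace ℝ (Fin n)) :
    ∫ c in Set.Ioi (0 : ℝ), ∫ w, ((c ^ (s / 2 - 1) : ℝ) : ℂ) *
      (Complex.exp (-(c : ℂ) * ‖w‖ ^ 2 + 2 * π * Complex.I * (inner ℝ x w : ℝ)) *
        (((‖w‖ ^ s : ℝ) : ℂ) * 𝓕 (⇑u) w)) = Real.Gamma (s / 2) * u x := by
  have : Nonempty (Fin n) := ⟨⟨0, hn⟩⟩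
  have hs2 : 0 < s / 2 := by positivity
  set F : ℝ → EuclideanSpace ℝ (Fin n) → ℂ := fun c w => ((c ^ (s / 2 - 1) : ℝ) : ℂ) *
      (Complex.exp (-(c : ℂ) * ‖w‖ ^ 2 + 2 * π * Complex.I * (inner ℝ x w : ℝ)) *
        (((‖w‖ ^ s : ℝ) : ℂ) * 𝓕 (⇑u) w)) with hF
  have hnorm : ∀ c ∈ Set.Ioi (0 : ℝ), ∀ w, ‖F c w‖ =
      (c ^ (s / 2 - 1) * Real.exp (-(‖w‖ ^ 2 * c))) * (‖w‖ ^ s * ‖𝓕 (⇑u) w‖) := fun c hc w => by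
    have hc' : 0 < c := hc
    rw [hF]
    simp only [norm_mul, Complex.norm_real, Complex.norm_exp]
    rw [Real.norm_of_nonneg (by positivity), Real.norm_of_nonneg (by positivity), ← mul_assoc]
    congr 3
    rw [← Complex.ofReal_pow]
    simp [-Complex.ofReal_pow, mul_comm]
  have hkey : ∀ w : EuclideanSpace ℝ (Fin n), w ≠ 0 →
      ∫ c in Set.Ioi (0 : ℝ), c ^ (s / 2 - 1) * Real.exp (-(‖w‖ ^ 2 * c)) =
        Real.Gamma (s / 2) * ‖w‖ ^ (-s) := fun w hw => by
    have hw' : 0 < ‖w‖ := norm_pos_iff.2 hw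
    rw [Real.integral_rpow_mul_exp_neg_mul_Ioi hs2 (by positivity), mul_comm, one_div,
      Real.inv_rpow (by positivity), ← Real.rpow_natCast, ← Real.rpow_mul hw'.le,
      ← Real.rpow_neg hw'.le]
    congr 2; push_cast; ring
  have hcancel : ∀ w : EuclideanSpace ℝ (Fin n), w ≠ 0 → ‖w‖ ^ (-s) * ‖w‖ ^ s = 1 :=
    fun w hw => by
    rw [← Real.rpow_add (norm_pos_iff.2 hw)]; simp
  have hcs : Continuous fun ξ : EuclideanSpace ℝ (Fin n) => ((‖ξ‖ ^ s : ℝ) : ℂ) :=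
    Complex.continuous_ofReal.comp (continuous_norm.rpow_const fun _ => Or.inr hs.le)
  have hFu : Continuous (𝓕 (⇑u)) := by
    rw [← SchwartzMap.fourier_coe]; exact (𝓕 u).continuous
  have hFui : Integrable (𝓕 (⇑u)) := by
    rw [← SchwartzMap.fourier_coe]; exact (𝓕 u).integrable
  have hmeas : Measurable (Function.uncurry F) := by
    have h1 : Measurable fun z : ℝ × EuclideanSpace ℝ (Fin n) =>
      ((z.1 ^ (s / 2 - 1) : ℝ) : ℂ) := by fun_prop
    have h2 : Measurable fun z : ℝ × EuclideanSpace ℝ (Fin n) =>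
      Complex.exp (-(z.1 : ℂ) * ‖z.2‖ ^ 2 + 2 * π * Complex.I * (inner ℝ x z.2 : ℝ)) :=
      Continuous.measurable (by fun_prop)
    exact h1.mul (h2.mul ((hcs.measurable.comp measurable_snd).mul
      (hFu.measurable.comp measurable_snd)))
  have hne0 : ∀ᵐ w : EuclideanSpace ℝ (Fin n), w ≠ 0 := Measure.ae_ne volume 0
  have hint : Integrable (Function.uncurry F)
      ((volume.restrict (Set.Ioi (0 : ℝ))).prod volume) := by
    rw [integrable_prod_iff' hmeas.aestronglyMeasurable]
    constructor
    · filter_upwards [hne0] with w hw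
      have hw' : 0 < ‖w‖ := norm_pos_iff.2 hw
      have h1 := (integrableOn_rpow_mul_exp_neg_mul hs2 (pow_pos hw' 2)).mul_const
        (‖w‖ ^ s * ‖𝓕 (⇑u) w‖)
      refine Integrable.mono' h1 (hmeas.comp measurable_prodMk_right).aestronglyMeasurable
        ((ae_restrict_iff' measurableSet_Ioi).2 (Filter.Eventually.of_forall fun c hc =>
          (hnorm c hc w).le))
    · refine (hFui.norm.const_mul (Real.Gamma (s / 2))).congr ?_
      filter_upwards [hne0] with w hw
      simp only [Function.uncurry_apply_pair]
      rw [setIntegral_congr_fun measurableSet_Ioi fun c hc => hnorm c hc w, integral_mul_const,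
        hkey w hw, mul_assoc, ← mul_assoc (‖w‖ ^ (-s)), hcancel w hw, one_mul]
  rw [integral_integral_swap hint]
  have hinner : ∀ᵐ w : EuclideanSpace ℝ (Fin n), ∫ c in Set.Ioi (0 : ℝ), F c w =
      Real.Gamma (s / 2) * (𝐞 (inner ℝ w x) • 𝓕 (⇑u) w) := by
    filter_upwards [hne0] with w hw
    have h1 : ∀ c : ℝ, F c w = ((c ^ (s / 2 - 1) * Real.exp (-(‖w‖ ^ 2 * c)) : ℝ) : ℂ) *
        (((‖w‖ ^ s : ℝ) : ℂ) * (𝐞 (inner ℝ w x) • 𝓕 (⇑u) w)) := fun c => by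
      rw [hF, Circle.smul_def, Real.fourierChar_apply, real_inner_comm, smul_eq_mul]
      simp only
      rw [Complex.exp_add, Complex.ofReal_mul, Complex.ofReal_exp]
      have e1 : -(c : ℂ) * ‖w‖ ^ 2 = ((-(‖w‖ ^ 2 * c) : ℝ) : ℂ) := by push_cast; ring
      have e2 : 2 * (π : ℂ) * Complex.I * ((inner ℝ x w : ℝ) : ℂ) =
        ((2 * π * inner ℝ x w : ℝ) : ℂ) * Complex.I := by push_cast; ring
      rw [e1, e2]; ring
    simp_rw [h1]
    rw [integral_mul_const, integral_complex_ofReal, hkey w hw, ← mul_assoc,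
      ← Complex.ofReal_mul, mul_assoc, hcancel w hw, mul_one]
  rw [integral_congr_ae hinner, integral_const_mul, ← Real.fourierInv_eq,
    u.continuous.fourierInv_fourier_eq u.integrable hFui]

/-- The pointwise bound `|u| ≤ C I_s |(-Δ)^{s/2} u|`. In `heat_superposition`, the Gaussians are
moved onto `(-Δ)^{s/2} u` by `gaussian_pairing`; integrating the resulting heat kernels over `c`
gives the Riesz kernel by `lintegral_heat`. -/
theorem enorm_le_rz_fracLap {n : ℕ} {s : ℝ} (hs : 0 < s) (hs1 : s ≤ 1) (hsn : s < n) :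
    ∃ C : ℝ≥0∞, C ≠ ⊤ ∧ ∀ (u : SchwartzMap (EuclideanSpace ℝ (Fin n)) ℂ)
      (x : EuclideanSpace ℝ (Fin n)),
      ‖u x‖ₑ ≤ C * rz s (fun y => ‖fracLap s (⇑u) y‖ₑ) x := by
  have hn : 0 < n := by
    have : (0 : ℝ) < n := hs.trans hsn
    exact_mod_cast this
  have : Nonempty (Fin n) := ⟨⟨0, hn⟩⟩
  have hΓ : 0 < Real.Gamma (s / 2) := Real.Gamma_pos_of_pos (by positivity)
  set β : ℝ := (n - s) / 2 with hβ
  have hβ0 : 0 < β := by rw [hβ]; linarith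
  set K : ℝ := π ^ ((n : ℝ) / 2) * ((1 / π ^ 2) ^ β * Real.Gamma β) with hK
  refine ⟨(ENNReal.ofReal (Real.Gamma (s / 2)))⁻¹ * ENNReal.ofReal K,
    ENNReal.mul_ne_top (ENNReal.inv_ne_top.2 (by simpa using hΓ)) ENNReal.ofReal_ne_top,
    fun u x => ?_⟩
  have hhi := integrable_symbol_mul_fourier hs hs1 u
  set g := fracLap s (⇑u) with hg
  set N : ℝ → EuclideanSpace ℝ (Fin n) → ℂ := fun c y =>
    (π / c : ℂ) ^ ((n : ℂ) / 2) * Complex.exp (-(π : ℂ) ^ 2 * ‖x - y‖ ^ 2 / c) with hN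
  have hgm : Measurable g := (continuous_fracLap hs hs1 u).measurable
  have hN1 : ∀ c ∈ Set.Ioi (0 : ℝ), ∀ y, ENNReal.ofReal (c ^ (s / 2 - 1)) * ‖N c y‖ₑ =
      ENNReal.ofReal (π ^ ((n : ℝ) / 2)) *
        ENNReal.ofReal (c ^ (-β - 1) * Real.exp (-(π ^ 2 * ‖x - y‖ ^ 2 / c))) := fun c hc y => by
    have hc' : 0 < c := hc
    have h1 : ‖N c y‖ = (π / c) ^ ((n : ℝ) / 2) * Real.exp (-(π ^ 2 * ‖x - y‖ ^ 2 / c)) := by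
      rw [hN]
      simp only
      rw [norm_mul, Complex.norm_exp]
      congr 1
      · rw [← Complex.ofReal_div, Complex.norm_cpow_eq_rpow_re_of_pos (by positivity)]
        simp
      · congr 1
        have : -(π : ℂ) ^ 2 * ‖x - y‖ ^ 2 / c = ((-(π ^ 2 * ‖x - y‖ ^ 2 / c) : ℝ) : ℂ) := by
          push_cast; ring
        rw [this, Complex.ofReal_re]
    rw [← ofReal_norm, h1, ← ENNReal.ofReal_mul (by positivity),
      ← ENNReal.ofReal_mul (by positivity), Real.div_rpow pi_pos.le hc'.le]
    congr 1
    have h2 : c ^ (-β - 1) = c ^ (s / 2 - 1) / c ^ ((n : ℝ) / 2) := by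
      rw [← Real.rpow_sub hc']; congr 1; rw [hβ]; ring
    rw [h2]; ring
  have hbound : ENNReal.ofReal (Real.Gamma (s / 2)) * ‖u x‖ₑ ≤
      ENNReal.ofReal K * rz s (fun y => ‖g y‖ₑ) x := by
    have hsup := heat_superposition hn hs u x
    simp_rw [integral_const_mul] at hsup
    have e1 : ENNReal.ofReal (Real.Gamma (s / 2)) * ‖u x‖ₑ =
        ‖(Real.Gamma (s / 2) : ℂ) * u x‖ₑ := by
      rw [enorm_mul, ← ofReal_norm (Real.Gamma (s / 2) : ℂ), Complex.norm_real,
        Real.norm_of_nonneg hΓ.le]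
    rw [e1, ← hsup]
    calc _ ≤ ∫⁻ c in Set.Ioi (0 : ℝ), ∫⁻ y, ENNReal.ofReal (π ^ ((n : ℝ) / 2)) *
          ENNReal.ofReal (c ^ (-β - 1) * Real.exp (-(π ^ 2 * ‖x - y‖ ^ 2 / c))) * ‖g y‖ₑ := by
          refine (enorm_integral_le_lintegral_enorm _).trans
            (setLIntegral_mono' measurableSet_Ioi fun c hc => ?_)
          have hc' : 0 < c := hc
          rw [gaussian_pairing hhi hc' x, enorm_mul]
          have e2 : ‖((c ^ (s / 2 - 1) : ℝ) : ℂ)‖ₑ = ENNReal.ofReal (c ^ (s / 2 - 1)) := by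
            rw [← ofReal_norm, Complex.norm_real, Real.norm_of_nonneg (by positivity)]
          rw [e2]
          calc _ ≤ ENNReal.ofReal (c ^ (s / 2 - 1)) * ∫⁻ y, ‖N c y‖ₑ * ‖g y‖ₑ := by
                gcongr
                refine (enorm_integral_le_lintegral_enorm _).trans_eq ?_
                congr 1 with y
                rw [enorm_mul]; rfl
            _ = ∫⁻ y, ENNReal.ofReal (c ^ (s / 2 - 1)) * (‖N c y‖ₑ * ‖g y‖ₑ) :=
                (lintegral_const_mul' _ _ ENNReal.ofReal_ne_top).symm
            _ = _ := by
                congr 1 with y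
                rw [← mul_assoc, hN1 c hc y]
            _ ≤ _ := le_rfl
      _ = ∫⁻ y, ∫⁻ c in Set.Ioi (0 : ℝ), ENNReal.ofReal (π ^ ((n : ℝ) / 2)) *
          ENNReal.ofReal (c ^ (-β - 1) * Real.exp (-(π ^ 2 * ‖x - y‖ ^ 2 / c))) * ‖g y‖ₑ := by
          rw [lintegral_lintegral_swap]
          refine Measurable.aemeasurable ?_
          have := hgm
          unfold Function.uncurry
          fun_prop
      _ ≤ ∫⁻ y, ENNReal.ofReal K * (‖x - y‖ₑ ^ (s - n) * ‖g y‖ₑ) := by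
          refine lintegral_mono_ae ?_
          filter_upwards [Measure.ae_ne volume x] with y hy
          have hd : 0 < ‖x - y‖ := norm_pos_iff.2 (sub_ne_zero.2 hy.symm)
          rw [lintegral_mul_const _ (by fun_prop),
            lintegral_const_mul _ (by fun_prop), lintegral_heat hβ0 (by positivity),
            ← mul_assoc]
          refine mul_le_mul' ?_ le_rfl
          rw [← ofReal_norm, ENNReal.ofReal_rpow_of_pos hd, ← ENNReal.ofReal_mul (by positivity),
            ← ENNReal.ofReal_mul (by positivity), hK]
          refine (congrArg ENNReal.ofReal ?_).le
          have h3 : (1 / (π ^ 2 * ‖x - y‖ ^ 2)) ^ β = (1 / π ^ 2) ^ β * ‖x - y‖ ^ (s - n) := by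
            rw [one_div, mul_inv, Real.mul_rpow (by positivity) (by positivity), one_div]
            congr 1
            rw [Real.inv_rpow (by positivity), ← Real.rpow_natCast, ← Real.rpow_mul hd.le,
              ← Real.rpow_neg hd.le]
            congr 1; rw [hβ]; push_cast; ring
          rw [h3]; ring
      _ = _ := by rw [lintegral_const_mul' _ _ ENNReal.ofReal_ne_top]; rfl
  calc ‖u x‖ₑ = (ENNReal.ofReal (Real.Gamma (s / 2)))⁻¹ *
        (ENNReal.ofReal (Real.Gamma (s / 2)) * ‖u x‖ₑ) := by
        rw [← mul_assoc, ENNReal.inv_mul_cancel (by simpa using hΓ) ENNReal.ofReal_ne_top,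
          one_mul]
    _ ≤ _ := by rw [mul_assoc]; gcongr

/-! ### The normalised Riesz potential -/

/-- The Bochner integral `rieszPot` is `0` at points where it does not converge, so the bound needs
no integrability assumption. -/
theorem enorm_rieszPot_le {n : ℕ} {α : ℝ} (hα : 0 < α) (hαn : α < n) :
    ∃ K : ℝ≥0∞, K ≠ ⊤ ∧ ∀ (f : EuclideanSpace ℝ (Fin n) → ℂ) (x : EuclideanSpace ℝ (Fin n)),
      ‖rieszPot α f x‖ₑ ≤ K * rz α (fun y => ‖f y‖ₑ) x := by
  set k : ℝ := Real.Gamma ((n - α) / 2) / (Real.Gamma (α / 2) * π ^ ((n : ℝ) / 2) * 2 ^ α) with hk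
  have hΓ : 0 < Real.Gamma (α / 2) := Real.Gamma_pos_of_pos (by linarith)
  have hΓ' : 0 < Real.Gamma ((n - α) / 2) := Real.Gamma_pos_of_pos (by linarith)
  have hk0 : 0 < k := by positivity
  refine ⟨ENNReal.ofReal k, ENNReal.ofReal_ne_top, fun f x => ?_⟩
  unfold rieszPot rz
  rw [← lintegral_const_mul' _ _ ENNReal.ofReal_ne_top]
  refine (enorm_integral_le_lintegral_enorm _).trans (lintegral_mono fun y => ?_)
  rw [enorm_mul, ← mul_assoc]
  refine mul_le_mul' ?_ le_rfl
  have hker : rieszKernel α (x - y) = k * (‖x - y‖ ^ ((n : ℝ) - α))⁻¹ := by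
    rw [rieszKernel, hk, ← div_div, div_eq_mul_inv _ (‖x - y‖ ^ ((n : ℝ) - α))]
  rw [hker, ← ofReal_norm, Complex.norm_real, Real.norm_of_nonneg (by positivity),
    ENNReal.ofReal_mul hk0.le]
  refine mul_le_mul' le_rfl ?_
  rcases eq_or_ne (x - y) 0 with h | h
  · -- the left side is the junk value `0⁻¹ = 0` on the diagonal
    rw [h, norm_zero, Real.zero_rpow (by linarith)]; simp
  · have hd : 0 < ‖x - y‖ := norm_pos_iff.2 h
    rw [← ofReal_norm (x - y), ENNReal.ofReal_rpow_of_pos hd, ← Real.rpow_neg hd.le, neg_sub]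

/-! ### The chain of exponents -/

/-- Riesz potential of the weighted power nonlinearity. -/
theorem riesz_weighted_power (n : ℕ) (hn : 3 ≤ n) (s α b p r r₃ : ℝ)
    (hs : 0 < s) (hs1 : s ≤ 1) (hα : 0 < α) (hα2 : α < n) (hb : 0 < b) (hb2 : b < n)
    (hp : 2 ≤ p)
    (hr1 : max s (s + (α - b) / p) < n / r) (hr2 : n / r < s + (n - b) / p)
    (hr3 : 1 / r₃ = p / r + (b - α - s * p) / n) :
    ∃ C > 0, ∀ u : SchwartzMap (EuclideanSpace ℝ (Fin n)) ℂ,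
      lorentz r₃ (ENNReal.ofReal (4 * (p + 1) / p))
          (rieszPot α (fun y => ((‖y‖ ^ (-b) * ‖u y‖ ^ p : ℝ) : ℂ))) ≤
        ENNReal.ofReal C * lorentz r 2 (fracLap s ⇑u) ^ p := by
  have hn0 : 0 < n := by omega
  have hn3 : (3 : ℝ) ≤ n := by exact_mod_cast hn
  have hnR : (0 : ℝ) < n := by linarith
  have hp0 : 0 < p := by linarith
  have hsr : s < n / r := (le_max_left _ _).trans_lt hr1
  have hr1' : s + (α - b) / p < n / r := (le_max_right _ _).trans_lt hr1
  have hr0 : 0 < r := by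
    by_contra hc
    have := div_nonpos_of_nonneg_of_nonpos hnR.le (not_lt.1 hc)
    linarith
  have hnr : (n : ℝ) / r = n * (1 / r) := by ring
  rw [hnr] at hsr hr1' hr2
  -- The exponents: `(-Δ)^{s/2} u` is in `L^{r,2}`, `u` in `L^{1/x,pq}`, the weighted power in
  -- `L^{1/z,q}`, and its Riesz potential in `L^{r₃,q}` with `1 / r₃ = z - α / n`.
  set x : ℝ := 1 / r - s / n with hx
  set q : ℝ := 4 * (p + 1) / p with hq
  set z : ℝ := p * x + b / n with hz
  have hpq : p * q = 4 * (p + 1) := by rw [hq]; field_simp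
  have hq0 : 0 < q := by positivity
  have hq1 : 1 < q := by rw [hq, lt_div_iff₀ hp0]; linarith
  have hpq1 : 1 < p * q := by rw [hpq]; linarith
  have hpq2 : 2 ≤ p * q := by rw [hpq]; linarith
  have hsx : s / n < 1 / r := by rw [div_lt_iff₀ hnR]; linarith
  have hnb : ((n : ℝ) - b) / p ≤ n / 2 := by
    rw [div_le_div_iff₀ hp0 two_pos]; nlinarith
  -- `n / r < s + (n - b) / p ≤ 1 + n / 2 < n`, the last step because `n ≥ 3`
  have hr1lt : 1 / r < 1 := by
    by_contra hc
    have : (n : ℝ) * 1 ≤ n * (1 / r) := by gcongr; exact not_lt.1 hc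
    linarith
  have hzn : z * n = p * (n * (1 / r)) - p * s + b := by
    rw [hz, hx]; field_simp
  have hzα : α / n < z := by
    rw [div_lt_iff₀ hnR, hzn]
    have : p * (s + (α - b) / p) < p * (n * (1 / r)) := by gcongr
    have e : p * (s + (α - b) / p) = p * s + (α - b) := by field_simp
    linarith
  have hz1 : z < 1 := by
    have : p * (n * (1 / r)) < p * (s + (n - b) / p) := by gcongr
    have e : p * (s + (n - b) / p) = p * s + (n - b) := by field_simp
    have : z * n < 1 * n := by rw [hzn]; linarith
    exact lt_of_mul_lt_mul_right this hnR.le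
  have hr3z : 1 / r₃ = z - α / n := by
    rw [hr3, hz, hx]; field_simp; ring
  have hr30 : 0 < r₃ := by
    have : 0 < 1 / r₃ := by rw [hr3z]; linarith
    exact one_div_pos.1 this
  obtain ⟨C₁, hC₁, h₁⟩ := enorm_le_rz_fracLap (n := n) hs hs1 (by linarith)
  obtain ⟨C₂, hC₂, h₂⟩ := dS_rz_le hn0 hs (by linarith) hsx hr1lt hpq1
  obtain ⟨C₃, hC₃, h₃⟩ := dS_weight_rpow_le (x := x) hn0 hb hp0 hq0
  obtain ⟨C₄, hC₄, h₄⟩ := dS_rz_le hn0 hα hα2 hzα hz1 hq1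
  obtain ⟨C₅, hC₅, h₅⟩ := enorm_rieszPot_le (n := n) hα hα2
  set C₀ : ℝ≥0∞ := 2 * ((2 : ℝ≥0∞) ^ (1 / r)) ^ (2 : ℝ) with hC₀d
  have h2top : ∀ w : ℝ, (2 : ℝ≥0∞) ^ w ≠ ⊤ := fun w =>
    ENNReal.rpow_ne_top_of_ne_zero (by simp) (by simp)
  have hC₀ : C₀ ≠ ⊤ := ENNReal.mul_ne_top (by simp)
    (ENNReal.rpow_ne_top_of_nonneg (by norm_num) (h2top _))
  set D : ℝ≥0∞ := C₅ ^ q * (C₄ * (C₃ * (C₁ ^ (p * q) * (C₂ * C₀ ^ (p * q / 2))))) with hD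
  have hDtop : D ≠ ⊤ := by
    refine ENNReal.mul_ne_top (ENNReal.rpow_ne_top_of_nonneg hq0.le hC₅)
      (ENNReal.mul_ne_top hC₄ (ENNReal.mul_ne_top hC₃ (ENNReal.mul_ne_top
      (ENNReal.rpow_ne_top_of_nonneg (by linarith) hC₁) (ENNReal.mul_ne_top hC₂
      (ENNReal.rpow_ne_top_of_nonneg (by linarith) hC₀)))))
  set C : ℝ≥0∞ := (2 : ℝ≥0∞) ^ (1 / r₃) * D ^ (1 / q) with hC
  have hCtop : C ≠ ⊤ := ENNReal.mul_ne_top (h2top _)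
    (ENNReal.rpow_ne_top_of_nonneg (by positivity) hDtop)
  -- one is added because the constant has to be positive
  refine ⟨C.toReal + 1, by positivity, fun u => ?_⟩
  set L := lorentz r 2 (fracLap s ⇑u) with hL
  set G : EuclideanSpace ℝ (Fin n) → ℝ≥0∞ := fun y => ‖fracLap s (⇑u) y‖ₑ with hG
  have hGm : Measurable G := (continuous_fracLap hs hs1 u).measurable.enorm
  set v : EuclideanSpace ℝ (Fin n) → ℝ≥0∞ :=
    fun y => ENNReal.ofReal (‖y‖ ^ (-b)) * ‖u y‖ₑ ^ p with hv
  have hvm : Measurable v := by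
    have : Measurable fun y => ‖u y‖ₑ := u.continuous.measurable.enorm
    fun_prop
  have hvf : ∀ y, ‖((‖y‖ ^ (-b) * ‖u y‖ ^ p : ℝ) : ℂ)‖ₑ = v y := fun y => by
    rw [← ofReal_norm, Complex.norm_real, Real.norm_of_nonneg (by positivity),
      ENNReal.ofReal_mul (by positivity), ← ENNReal.ofReal_rpow_of_nonneg (norm_nonneg _) hp0.le,
      ofReal_norm]
  have hG2 : dS (1 / r) 2 G ≤ C₀ * L ^ (2 : ℝ) :=
    dS_two_le_lorentz hr0 (fracLap s ⇑u) (norm_fracLap_le u)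
  have hGQ : dS (1 / r) (p * q) G ≤ C₀ ^ (p * q / 2) * L ^ (p * q) := by
    refine (dS_le_rpow_dS _ two_pos hpq2 G).trans
      ((ENNReal.rpow_le_rpow hG2 (by linarith)).trans_eq ?_)
    rw [ENNReal.mul_rpow_of_nonneg _ _ (by linarith), ← ENNReal.rpow_mul L]
    congr 2; ring
  have hu : dS x (p * q) (fun y => ‖u y‖ₑ) ≤
      C₁ ^ (p * q) * (C₂ * (C₀ ^ (p * q / 2) * L ^ (p * q))) := by
    refine (dS_mono (by linarith) (h₁ u)).trans ((dS_const_mul_le (by linarith) _ _).trans ?_)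
    exact mul_le_mul' le_rfl ((h₂ G hGm).trans (mul_le_mul' le_rfl hGQ))
  have hfin : dS (1 / r₃) q (fun y => ‖rieszPot α
      (fun y => ((‖y‖ ^ (-b) * ‖u y‖ ^ p : ℝ) : ℂ)) y‖ₑ) ≤ D * L ^ (p * q) := by
    rw [hr3z]
    refine (dS_mono hq0.le (h₅ _)).trans ((dS_const_mul_le hq0.le _ _).trans ?_)
    simp_rw [hvf]
    calc C₅ ^ q * dS (z - α / n) q (rz α v)
        ≤ C₅ ^ q * (C₄ * (C₃ * (C₁ ^ (p * q) * (C₂ * (C₀ ^ (p * q / 2) * L ^ (p * q)))))) :=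
          mul_le_mul' le_rfl ((h₄ v hvm).trans (mul_le_mul' le_rfl ((h₃ _).trans
            (mul_le_mul' le_rfl hu))))
      _ = D * L ^ (p * q) := by rw [hD]; ring
  refine (lorentz_le_dS hr30 hq0 _).trans ?_
  calc (2 : ℝ≥0∞) ^ (1 / r₃) * dS (1 / r₃) q (fun y => ‖rieszPot α
      (fun y => ((‖y‖ ^ (-b) * ‖u y‖ ^ p : ℝ) : ℂ)) y‖ₑ) ^ (1 / q)
      ≤ (2 : ℝ≥0∞) ^ (1 / r₃) * (D * L ^ (p * q)) ^ (1 / q) :=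
        mul_le_mul' le_rfl (ENNReal.rpow_le_rpow hfin (by positivity))
    _ = C * L ^ p := by
        have e : p * q * (1 / q) = p := by field_simp
        rw [ENNReal.mul_rpow_of_nonneg _ _ (by positivity), ← ENNReal.rpow_mul L, hC, e, mul_assoc]
    _ ≤ ENNReal.ofReal (C.toReal + 1) * L ^ p := by
        refine mul_le_mul' ?_ le_rfl
        rw [← ENNReal.ofReal_toReal hCtop, ENNReal.toReal_ofReal ENNReal.toReal_nonneg]
        exact ENNReal.ofReal_le_ofReal (by linarith)
end

section
/- Sobolev inequality in Lorentz spaces: let n ≥ 1, 1 < p < ∞, 1 ≤ q ≤ ∞ and 0 < s < n/p, and define p₁ by 1/p₁ = 1/p − s/n. Then there is a constant C such that for all Schwartz functions f on ℝⁿ, ‖f‖_{L^{p₁,q}} ≤ C ‖(−Δ)^{s/2} f‖_{L^{p,q}}. -/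
/-!
The inequality is reduced to one about averaging kernels by Gaussian subordination. With
`g = (-Δ)^{s/2} f` and `G_u` the Gaussian of mass one and height `1/u`, integrating the identity
`c |ξ|^{-s} = ∫₀^∞ u^{s/n-1} exp(-π u^{2/n} |ξ|²) du` against `|ξ|^s 𝓕f(ξ)` gives the formula
`c f = ∫₀^∞ u^{s/n-1} (G_u ∗ g) du`, hence the pointwise bound `enorm_le_gauss`.

Only two facts about the kernels enter from here on: mass at most `1`, height at most `1/u`.
Let `g**(u) = u⁻¹ ∫₀^u g*`. The bathtub principle `lintegral_mul_le_rearr` shows that `G_u ∗ |g|`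
is pointwise at most `g**(u)`, and that its mean over a set of measure at least `t` is at most
`g**(t)`. Taking the mean over `{|f| > λ}` for `λ < f*(t)` gives an inequality of O'Neil type,
`oneil`: `f*(t) ≤ c⁻¹ ∫₀^∞ u^{s/n-1} g**(max t u) du`.

Substituting `u = t v`, the right-hand side times `t^{1/p₁}` is an average of dilates of
`t^{1/p} g**(t)`, against a measure in `v` which is finite because `0 < s/n < 1/p`; in the same way
`t^{1/p} g**(t)` is an average of dilates of `t^{1/p} g*(t)`, against a measure which is finite
because `p > 1`. As `dt/t` is invariant under dilations, an average of dilates is bounded on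
`L^q(dt/t)` by the mass of the measure (`haarLq_le`), and two applications finish the proof.
In `lorentz_le_of_kernel` the case `q = ∞` needs no separate treatment.
-/

open MeasureTheory Real FourierTransform
open scoped ENNReal

/-! ### Hardy's inequality on the multiplicative group -/

/-- The `L^q((0,∞), dt/t)` quasinorm of an `ℝ≥0∞`-valued function; the Lorentz quasinorm of `f` is
this functional at `t ↦ t^{1/p} f*(t)`. -/
noncomputable def haarLq (q : ℝ≥0∞) (φ : ℝ → ℝ≥0∞) : ℝ≥0∞ :=
  if q = ∞ then ⨆ t ∈ Set.Ioi (0:ℝ), φ t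
  else (∫⁻ t in Set.Ioi (0:ℝ), φ t ^ q.toReal / ENNReal.ofReal t) ^ (1/q.toReal)

lemma lintegral_scale {F : ℝ → ℝ≥0∞} (hF : Measurable F) {s : Set ℝ} (hs : MeasurableSet s)
    {a : ℝ} (ha : 0 < a) :
    ∫⁻ t in s, F t = ENNReal.ofReal a * ∫⁻ t in (a * ·) ⁻¹' s, F (a * t) := by
  have hm : Measurable (fun t : ℝ => a * t) := measurable_const_mul a
  rw [← lintegral_indicator hs, ← lintegral_indicator (hm hs)]
  conv_lhs => rw [← Real.smul_map_volume_mul_left ha.ne']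
  rw [lintegral_smul_measure, lintegral_map (hF.indicator hs) hm, abs_of_pos ha, smul_eq_mul]
  rfl

/-- Invariance of `dt/t` under dilations. -/
lemma lintegral_haar_scale {F : ℝ → ℝ≥0∞} (hF : Measurable F) {a : ℝ} (ha : 0 < a) :
    ∫⁻ t in Set.Ioi (0:ℝ), F (t * a) / ENNReal.ofReal t
      = ∫⁻ t in Set.Ioi (0:ℝ), F t / ENNReal.ofReal t := by
  rw [lintegral_scale (F := fun t => F t / ENNReal.ofReal t) (by fun_prop) measurableSet_Ioi ha]
  have : (a * ·) ⁻¹' Set.Ioi (0:ℝ) = Set.Ioi 0 := by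
    ext t; simp [ha]
  rw [this, ← lintegral_const_mul _ (by fun_prop)]
  refine setLIntegral_congr_fun measurableSet_Ioi fun t ht => ?_
  have ht : 0 < t := ht
  rw [ENNReal.ofReal_mul ha.le, mul_comm a t, div_eq_mul_inv, div_eq_mul_inv,
    ENNReal.mul_inv (by simp [ha]) (by simp)]
  have h1 : ENNReal.ofReal a * (ENNReal.ofReal a)⁻¹ = 1 :=
    ENNReal.mul_inv_cancel (by simp [ha]) (by simp)
  calc _ = (ENNReal.ofReal a * (ENNReal.ofReal a)⁻¹) * (F (t * a) * (ENNReal.ofReal t)⁻¹) := by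
        rw [h1, one_mul]
    _ = _ := by ring

/-- Jensen's inequality for a measure of arbitrary total mass. -/
lemma lintegral_rpow_le {α : Type*} [MeasurableSpace α] (μ : Measure α) {h : α → ℝ≥0∞}
    (hh : Measurable h) {r : ℝ} (hr : 1 ≤ r) :
    (∫⁻ v, h v ∂μ) ^ r ≤ μ Set.univ ^ (r - 1) * ∫⁻ v, h v ^ r ∂μ := by
  have hr0 : 0 < r := by linarith
  have h1 := ENNReal.lintegral_mul_norm_pow_le (μ := μ) (f := fun v => h v ^ r) (g := fun _ => 1)
    (by fun_prop) (by fun_prop) (p := 1/r) (q := 1 - 1/r) (by positivity)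
    (by rw [sub_nonneg, div_le_one hr0]; exact hr) (by ring)
  have h2 : ∀ v, (h v ^ r) ^ (1/r) * (1:ℝ≥0∞) ^ (1 - 1/r) = h v := fun v => by
    rw [← ENNReal.rpow_mul, mul_one_div_cancel hr0.ne']; simp
  simp_rw [h2] at h1
  rw [lintegral_const, one_mul] at h1
  calc _ ≤ _ := ENNReal.rpow_le_rpow h1 hr0.le
    _ = _ := by
      rw [ENNReal.mul_rpow_of_nonneg _ _ hr0.le, ← ENNReal.rpow_mul, ← ENNReal.rpow_mul,
        one_div_mul_cancel hr0.ne', ENNReal.rpow_one, sub_mul, one_div_mul_cancel hr0.ne', one_mul,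
        mul_comm]

/-- Hardy's inequality in the form of Minkowski's inequality on the multiplicative group: an
average of dilates of `φ` is bounded in `L^q(dt/t)` by the total mass times the norm of `φ`. -/
lemma haarLq_le {q : ℝ≥0∞} (hq : 1 ≤ q) (μ : Measure ℝ) [SFinite μ] {m : ℝ → ℝ}
    (hm : Measurable m) (hm0 : ∀ᵐ v ∂μ, 0 < m v) {φ : ℝ → ℝ≥0∞} (hφ : Measurable φ)
    {Φ : ℝ → ℝ≥0∞} (hΦ : ∀ t, 0 < t → Φ t ≤ ∫⁻ v, φ (t * m v) ∂μ) :
    haarLq q Φ ≤ μ Set.univ * haarLq q φ := by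
  unfold haarLq
  split_ifs with h
  · refine iSup₂_le fun t ht => (hΦ t ht).trans ?_
    calc _ ≤ ∫⁻ v, (⨆ t ∈ Set.Ioi (0:ℝ), φ t) ∂μ := by
          refine lintegral_mono_ae ?_
          filter_upwards [hm0] with v hv
          exact le_iSup₂ (f := fun t (_ : t ∈ Set.Ioi (0:ℝ)) => φ t) (t * m v) (mul_pos ht hv)
      _ = _ := by rw [lintegral_const, mul_comm]
  · set r := q.toReal with hr
    have hr1 : 1 ≤ r := by
      rw [hr, ← ENNReal.toReal_one]; exact ENNReal.toReal_mono h hq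
    have hr0 : 0 < r := by linarith
    have key : ∫⁻ t in Set.Ioi (0:ℝ), Φ t ^ r / ENNReal.ofReal t ≤
        μ Set.univ ^ r * ∫⁻ t in Set.Ioi (0:ℝ), φ t ^ r / ENNReal.ofReal t := by
      calc _ ≤ ∫⁻ t in Set.Ioi (0:ℝ), μ Set.univ ^ (r-1) *
              ∫⁻ v, φ (t * m v) ^ r / ENNReal.ofReal t ∂μ := by
            refine setLIntegral_mono' measurableSet_Ioi fun t ht => ?_
            have := lintegral_rpow_le μ (h := fun v => φ (t * m v)) (by fun_prop) hr1
            simp_rw [div_eq_mul_inv]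
            rw [lintegral_mul_const _ (by fun_prop), ← mul_assoc]
            gcongr
            exact (ENNReal.rpow_le_rpow (hΦ t ht) hr0.le).trans this
        _ = μ Set.univ ^ (r-1) * ∫⁻ v, (∫⁻ t in Set.Ioi (0:ℝ),
              φ (t * m v) ^ r / ENNReal.ofReal t) ∂μ := by
            rw [lintegral_const_mul, lintegral_lintegral_swap]
            · apply Measurable.aemeasurable
              unfold Function.uncurry
              fun_prop
            · apply Measurable.lintegral_prod_right'
                (f := fun z : ℝ × ℝ => φ (z.1 * m z.2) ^ r / ENNReal.ofReal z.1)
              fun_prop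
        _ = μ Set.univ ^ (r-1) * ∫⁻ v, (∫⁻ t in Set.Ioi (0:ℝ),
              φ t ^ r / ENNReal.ofReal t) ∂μ := by
            congr 1
            refine lintegral_congr_ae ?_
            filter_upwards [hm0] with v hv
            exact lintegral_haar_scale (F := fun t => φ t ^ r) (by fun_prop) hv
        _ = _ := by
            rw [lintegral_const]
            have : μ Set.univ ^ r = μ Set.univ ^ (r-1) * μ Set.univ := by
              conv_rhs => rw [← ENNReal.rpow_one (μ Set.univ), ← ENNReal.rpow_mul, one_mul,
                ← ENNReal.rpow_add_of_nonneg _ _ (by linarith) (by norm_num), sub_add_cancel]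
            rw [this]; ring
    calc _ ≤ _ := ENNReal.rpow_le_rpow key (by positivity)
      _ = _ := by
        rw [ENNReal.mul_rpow_of_nonneg _ _ (by positivity), ← ENNReal.rpow_mul,
          mul_one_div_cancel hr0.ne', ENNReal.rpow_one]

/-! ### Rearrangements and O'Neil's inequality -/

section Rearrangement

variable {n : ℕ}

local notation "V" => EuclideanSpace ℝ (Fin n)

lemma distFn_antitone (g : V → ℂ) : Antitone (distFn g) := fun _ _ h =>
  measure_mono fun _ hx => lt_of_le_of_lt h hx

/-- For bounded `g`, the infimum defining `g*` is taken over a nonempty set. -/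
lemma rearr_set_nonempty {g : V → ℂ} {B : ℝ} (hB : ∀ x, ‖g x‖ ≤ B) (t : ℝ) :
    {l : ℝ | 0 < l ∧ distFn g l ≤ ENNReal.ofReal t}.Nonempty := by
  refine ⟨max B 1, by positivity, ?_⟩
  have : {x | max B 1 < ‖g x‖} = ∅ :=
    Set.eq_empty_of_forall_notMem fun x hx => absurd hx (not_lt.2 ((hB x).trans (le_max_left _ _)))
  rw [distFn, this]
  simp

lemma rearr_bddBelow (g : V → ℂ) (t : ℝ) :
    BddBelow {l : ℝ | 0 < l ∧ distFn g l ≤ ENNReal.ofReal t} := ⟨0, fun _ h => h.1.le⟩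

lemma rearr_nonneg_s12 (g : V → ℂ) (t : ℝ) : 0 ≤ rearr g t :=
  Real.sInf_nonneg fun _ h => h.1.le

lemma rearr_antitone {g : V → ℂ} {B : ℝ} (hB : ∀ x, ‖g x‖ ≤ B) : Antitone (rearr g) :=
  fun s t h => csInf_le_csInf (rearr_bddBelow g t) (rearr_set_nonempty hB s)
    fun _ hl => ⟨hl.1, hl.2.trans (ENNReal.ofReal_le_ofReal h)⟩

/-- The bathtub form of the Hardy–Littlewood rearrangement inequality: a weight `0 ≤ w ≤ 1` of
total mass at most `τ` satisfies `∫ |g| w ≤ ∫₀^τ g*`. -/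
lemma lintegral_mul_le_rearr {g : V → ℂ} (hg : Measurable g) {B : ℝ} (hB : ∀ x, ‖g x‖ ≤ B)
    {w : V → ℝ≥0∞} (hw : Measurable w) (hw1 : ∀ x, w x ≤ 1) {τ : ℝ}
    (hwτ : ∫⁻ x, w x ≤ ENNReal.ofReal τ) :
    ∫⁻ x, w x * ‖g x‖ₑ ≤ ∫⁻ t in Set.Ioo 0 τ, ENNReal.ofReal (rearr g t) := by
  have hd : Measurable (distFn g) := (distFn_antitone g).measurable
  calc ∫⁻ x, w x * ‖g x‖ₑ
      = ∫⁻ x, ENNReal.ofReal ‖g x‖ ∂(volume.withDensity w) := by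
        rw [lintegral_withDensity_eq_lintegral_mul _ hw (by fun_prop)]
        simp
    _ = ∫⁻ l in Set.Ioi 0, (volume.withDensity w) {x | l < ‖g x‖} :=
        lintegral_eq_lintegral_meas_lt _ (Filter.Eventually.of_forall fun x => norm_nonneg _)
          (by fun_prop)
    _ ≤ ∫⁻ l in Set.Ioi 0, min (ENNReal.ofReal τ) (distFn g l) := by
        refine lintegral_mono fun l => le_min ?_ ?_
        · refine (measure_mono (Set.subset_univ _)).trans ?_
          rwa [withDensity_apply _ MeasurableSet.univ, Measure.restrict_univ]
        · rw [withDensity_apply _ (measurableSet_lt measurable_const hg.norm)]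
          refine (lintegral_mono (g := fun _ => 1) hw1).trans ?_
          simp [distFn]
    _ ≤ ∫⁻ l in Set.Ioi 0, ∫⁻ t in Set.Ioo 0 τ,
          {z : ℝ × ℝ | ENNReal.ofReal z.2 < distFn g z.1}.indicator 1 (l, t) := by
        refine lintegral_mono fun l => ?_
        have : (fun t => {z : ℝ × ℝ | ENNReal.ofReal z.2 < distFn g z.1}.indicator
            (1 : ℝ × ℝ → ℝ≥0∞) (l, t)) =
            {t : ℝ | ENNReal.ofReal t < distFn g l}.indicator 1 := by
          ext t; simp [Set.indicator]
        rw [this, lintegral_indicator_one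
          (measurableSet_lt ENNReal.measurable_ofReal measurable_const),
          Measure.restrict_apply (measurableSet_lt ENNReal.measurable_ofReal measurable_const)]
        have h2 : Set.Ioo 0 (min (ENNReal.ofReal τ) (distFn g l)).toReal ⊆
            {t : ℝ | ENNReal.ofReal t < distFn g l} ∩ Set.Ioo 0 τ := by
          intro t ht
          have h3 : ENNReal.ofReal t < min (ENNReal.ofReal τ) (distFn g l) :=
            (ENNReal.ofReal_lt_iff_lt_toReal ht.1.le (by simp)).2 ht.2
          rw [lt_min_iff] at h3
          exact ⟨h3.2, ht.1, (ENNReal.ofReal_lt_ofReal_iff'.1 h3.1).1⟩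
        refine le_trans ?_ (measure_mono h2)
        rw [Real.volume_Ioo, sub_zero, ENNReal.ofReal_toReal (by simp)]
    _ = ∫⁻ t in Set.Ioo 0 τ, ∫⁻ l in Set.Ioi 0,
          {z : ℝ × ℝ | ENNReal.ofReal z.2 < distFn g z.1}.indicator 1 (l, t) := by
        rw [lintegral_lintegral_swap]
        apply Measurable.aemeasurable
        refine Measurable.indicator measurable_one ?_
        exact measurableSet_lt (by fun_prop) (by fun_prop)
    _ ≤ _ := by
        refine lintegral_mono fun t => ?_
        have : (fun l => {z : ℝ × ℝ | ENNReal.ofReal z.2 < distFn g z.1}.indicator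
            (1 : ℝ × ℝ → ℝ≥0∞) (l, t)) =
            {l : ℝ | ENNReal.ofReal t < distFn g l}.indicator 1 := by
          ext l; simp [Set.indicator]
        have hms : MeasurableSet {l : ℝ | ENNReal.ofReal t < distFn g l} :=
          measurableSet_lt measurable_const hd
        rw [this, lintegral_indicator_one hms, Measure.restrict_apply hms]
        have h2 : {l : ℝ | ENNReal.ofReal t < distFn g l} ∩ Set.Ioi 0 ⊆
            Set.Ioc 0 (rearr g t) := by
          rintro l ⟨h1, h0⟩
          refine ⟨h0, ?_⟩
          by_contra! hlt
          obtain ⟨l', hl', hll⟩ := exists_lt_of_csInf_lt (rearr_set_nonempty hB t) hlt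
          exact absurd h1 (not_lt.2 ((distFn_antitone g hll.le).trans hl'.2))
        refine (measure_mono h2).trans ?_
        rw [Real.volume_Ioc, sub_zero]

/-- The averaged rearrangement `g**(u) = u⁻¹ ∫₀^u g*` for `u > 0`, written as an average of
dilates of `g*`. -/
noncomputable def rearrAvg (g : V → ℂ) (u : ℝ) : ℝ≥0∞ :=
  ∫⁻ v in Set.Ioo (0:ℝ) 1, ENNReal.ofReal (rearr g (u * v))

lemma rearrAvg_eq {g : V → ℂ} {B : ℝ} (hB : ∀ x, ‖g x‖ ≤ B) {u : ℝ} (hu : 0 < u) :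
    ∫⁻ t in Set.Ioo 0 u, ENNReal.ofReal (rearr g t) = ENNReal.ofReal u * rearrAvg g u := by
  have hm : Measurable (rearr g) := (rearr_antitone hB).measurable
  rw [lintegral_scale (F := fun t => ENNReal.ofReal (rearr g t)) (by fun_prop)
    measurableSet_Ioo hu, rearrAvg]
  have : (u * ·) ⁻¹' Set.Ioo (0:ℝ) u = Set.Ioo 0 1 := by
    ext t; simp [hu, hu.ne']
  rw [this]

lemma rearrAvg_antitone {g : V → ℂ} {B : ℝ} (hB : ∀ x, ‖g x‖ ≤ B) :
    Antitone (rearrAvg g) := fun u u' h => by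
  refine setLIntegral_mono' measurableSet_Ioo fun v hv => ENNReal.ofReal_le_ofReal ?_
  exact rearr_antitone hB (mul_le_mul_of_nonneg_right h hv.1.le)

/-- O'Neil's inequality for a superposition `∫₀^∞ u^{σ-1} G_u ∗ |g| du` of averaging kernels
`G_u`, each of mass at most one and height at most `1/u`. -/
lemma oneil {f g : V → ℂ} (hf : Integrable f) (hg : Measurable g) {B : ℝ}
    (hB : ∀ x, ‖g x‖ ≤ B) {G : ℝ → V → ℝ≥0∞} (hG : Measurable (Function.uncurry G))
    (hGsup : ∀ u, 0 < u → ∀ z, G u z ≤ (ENNReal.ofReal u)⁻¹)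
    (hGint : ∀ u, 0 < u → ∫⁻ z, G u z ≤ 1) {k : ℝ → ℝ≥0∞} (hk : Measurable k)
    (hfg : ∀ x, ‖f x‖ₑ ≤ ∫⁻ u in Set.Ioi (0:ℝ), k u * ∫⁻ y, G u (x - y) * ‖g y‖ₑ)
    {t : ℝ} (ht : 0 < t) :
    ENNReal.ofReal (rearr f t) ≤ ∫⁻ u in Set.Ioi (0:ℝ), k u * rearrAvg g (max t u) := by
  have hGu : ∀ u, Measurable (G u) := fun u => hG.comp (measurable_const.prodMk measurable_id)
  have hP : Measurable (fun z : V × ℝ => ∫⁻ y, G z.2 (z.1 - y) * ‖g y‖ₑ) := by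
    apply Measurable.lintegral_prod_right'
      (f := fun z : (V × ℝ) × V => G z.1.2 (z.1.1 - z.2) * ‖g z.2‖ₑ)
    have : Measurable (fun z : (V × ℝ) × V => G z.1.2 (z.1.1 - z.2)) :=
      hG.comp (g := Function.uncurry G) (f := fun z : (V × ℝ) × V => (z.1.2, z.1.1 - z.2))
        (by fun_prop)
    fun_prop
  have hGx : ∀ u, 0 < u → ∀ x, ∫⁻ y, G u (x - y) ≤ 1 := fun u hu x => by
    rw [lintegral_sub_left_eq_self (G u)]; exact hGint u hu
  -- It suffices to bound each positive `λ < f*(t)`, for which `|{|f| > λ}| > t`.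
  refine le_of_forall_lt fun c hc => ?_
  obtain ⟨c', hcc', hc'⟩ := exists_between hc
  obtain ⟨l, rfl⟩ : ∃ l : NNReal, c' = l := ⟨_, (ENNReal.coe_toNNReal hc'.ne_top).symm⟩
  have hl0 : 0 < (l : ℝ) := by
    have := bot_le.trans_lt hcc'
    rw [bot_eq_zero] at this
    exact_mod_cast this
  have hlr : (l : ℝ) < rearr f t := by
    have h := (ENNReal.lt_ofReal_iff_toReal_lt (by simp)).1 hc'
    simpa using h
  refine hcc'.trans_le ?_
  set D := distFn f l with hD
  have hDt : ENNReal.ofReal t < D := by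
    by_contra! h
    exact absurd hlr (not_lt.2 (csInf_le (rearr_bddBelow f t) ⟨hl0, h⟩))
  have hDtop : D ≠ ∞ := (hf.measure_norm_gt_lt_top hl0).ne
  have hD0 : D ≠ 0 := (bot_le.trans_lt hDt).ne'
  -- The weight `θ 1_E` on `E = {|f| > λ}` is at most one and has total mass exactly `t`.
  set E : Set V := {x | (l : ℝ) < ‖f x‖} with hE
  have hEm : NullMeasurableSet E :=
    nullMeasurableSet_lt aemeasurable_const hf.1.norm.aemeasurable
  set E' := toMeasurable volume E with hE'
  have hE'm : MeasurableSet E' := measurableSet_toMeasurable _ _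
  have hvE' : volume E' = D := measure_toMeasurable E
  set θ := ENNReal.ofReal t / D with hθ
  have hθ1 : θ ≤ 1 := ENNReal.div_le_of_le_mul (by rw [one_mul]; exact hDt.le)
  have hθD : θ * D = ENNReal.ofReal t := ENNReal.div_mul_cancel hD0 hDtop
  set P : V → ℝ → ℝ≥0∞ := fun x u => ∫⁻ y, G u (x - y) * ‖g y‖ₑ with hPdef
  have hPux : ∀ u, Measurable (fun x => P x u) := fun u =>
    hP.comp (measurable_id.prodMk measurable_const)
  have bound : ∀ u, 0 < u → θ * ∫⁻ x in E', P x u ≤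
      ENNReal.ofReal t * rearrAvg g (max t u) := by
    intro u hu
    rcases le_total u t with hut | hut
    · rw [max_eq_left hut, ← rearrAvg_eq hB ht]
      have hGE : Measurable (fun y => ∫⁻ x in E', G u (x - y)) := by
        apply Measurable.lintegral_prod_right' (f := fun z : V × V => G u (z.2 - z.1))
        exact (hGu u).comp (by fun_prop)
      calc θ * ∫⁻ x in E', P x u
          = θ * ∫⁻ y, (∫⁻ x in E', G u (x - y)) * ‖g y‖ₑ := by
            congr 1
            simp only [hPdef]
            rw [lintegral_lintegral_swap]
            · refine lintegral_congr fun y => ?_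
              rw [lintegral_mul_const]
              exact (hGu u).comp (by fun_prop)
            · apply Measurable.aemeasurable
              have : Measurable (fun z : V × V => G u (z.1 - z.2)) :=
                (hGu u).comp (by fun_prop)
              unfold Function.uncurry
              fun_prop
        _ = ∫⁻ y, (θ * ∫⁻ x in E', G u (x - y)) * ‖g y‖ₑ := by
            rw [← lintegral_const_mul _ (by fun_prop)]
            simp_rw [mul_assoc]
        _ ≤ _ := by
            refine lintegral_mul_le_rearr hg hB (by fun_prop) (fun y => ?_) ?_
            · refine mul_le_one' hθ1 ((setLIntegral_le_lintegral _ _).trans ?_)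
              rw [lintegral_sub_right_eq_self (G u)]
              exact hGint u hu
            · rw [lintegral_const_mul _ hGE, lintegral_lintegral_swap]
              · calc _ ≤ θ * ∫⁻ x in E', 1 := by
                      gcongr with x
                      exact hGx u hu x
                  _ = _ := by simp [hvE', hθD]
              · apply Measurable.aemeasurable
                exact (hGu u).comp (by fun_prop)
    · rw [max_eq_right hut]
      have : ∀ x, P x u ≤ rearrAvg g u := by
        intro x
        have hu0 : ENNReal.ofReal u ≠ 0 := by simp [hu]
        rw [← ENNReal.mul_le_mul_iff_right hu0 ENNReal.ofReal_ne_top,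
          ← rearrAvg_eq hB hu]
        have hm : Measurable (fun y => G u (x - y)) := (hGu u).comp (by fun_prop)
        simp only [hPdef]
        rw [← lintegral_const_mul _ (by fun_prop)]
        simp_rw [← mul_assoc]
        refine lintegral_mul_le_rearr hg hB (by fun_prop) (fun y => ?_) ?_
        · calc _ ≤ ENNReal.ofReal u * (ENNReal.ofReal u)⁻¹ := by gcongr; exact hGsup u hu _
            _ ≤ 1 := ENNReal.mul_inv_le_one _
        · rw [lintegral_const_mul _ hm]
          exact (mul_le_mul_right (hGx u hu x) _).trans (by rw [mul_one])
      calc _ ≤ θ * ∫⁻ x in E', rearrAvg g u := by gcongr; exact this _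
        _ = _ := by rw [setLIntegral_const, hvE', mul_comm (rearrAvg g u), ← mul_assoc, hθD]
  have ht0 : ENNReal.ofReal t ≠ 0 := by simp [ht]
  rw [← ENNReal.mul_le_mul_iff_right ht0 ENNReal.ofReal_ne_top]
  have hmA : Measurable (rearrAvg g) := (rearrAvg_antitone hB).measurable
  calc ENNReal.ofReal t * l = θ * ∫⁻ x in E, (l : ℝ≥0∞) := by
        rw [setLIntegral_const, ← hθD, mul_assoc, mul_comm (l : ℝ≥0∞)]; rfl
    _ ≤ θ * ∫⁻ x in E, ‖f x‖ₑ := by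
        gcongr 1
        refine lintegral_mono_ae ?_
        refine (ae_restrict_iff'₀ hEm).2 (Filter.Eventually.of_forall fun x hx => ?_)
        have hx : (l : ℝ) < ‖f x‖ := hx
        rw [enorm_eq_nnnorm]
        exact_mod_cast hx.le
    _ ≤ θ * ∫⁻ x in E', ‖f x‖ₑ := by
        gcongr; exact subset_toMeasurable _ _
    _ ≤ θ * ∫⁻ x in E', ∫⁻ u in Set.Ioi (0:ℝ), k u * P x u := by
        gcongr with x; exact hfg x
    _ = ∫⁻ u in Set.Ioi (0:ℝ), k u * (θ * ∫⁻ x in E', P x u) := by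
        rw [lintegral_lintegral_swap, ← lintegral_const_mul']
        · refine lintegral_congr fun u => ?_
          rw [lintegral_const_mul _ (hPux u)]
          ring
        · exact (hθ1.trans_lt ENNReal.one_lt_top).ne
        · apply Measurable.aemeasurable
          exact (hk.comp measurable_snd).mul hP
    _ ≤ ∫⁻ u in Set.Ioi (0:ℝ), k u * (ENNReal.ofReal t * rearrAvg g (max t u)) := by
        refine setLIntegral_mono' measurableSet_Ioi fun u hu => ?_
        exact mul_le_mul_right (bound u hu) _
    _ = _ := by
        rw [← lintegral_const_mul _ (by fun_prop)]
        exact lintegral_congr fun u => by ring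

end Rearrangement

/-! ### Lorentz bounds for superpositions of averaging kernels -/

section Constants

/-- The mass of the measure which expresses `t^{1/p} g**(t)` as an average of dilates of
`t^{1/p} g*(t)`. -/
noncomputable def avgMass (p : ℝ) : ℝ≥0∞ :=
  ∫⁻ v in Set.Ioo (0:ℝ) 1, ENNReal.ofReal (v ^ (-(1/p)))

/-- The mass of the measure which expresses the right-hand side of O'Neil's inequality as an
average of dilates of `t^{1/p} g**(t)`. -/
noncomputable def potMass (p σ : ℝ) : ℝ≥0∞ :=
  ∫⁻ v in Set.Ioi (0:ℝ), ENNReal.ofReal (v ^ (σ - 1) * (max 1 v) ^ (-(1/p)))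

/-- Finiteness uses `1 < p`. -/
lemma avgMass_lt_top {p : ℝ} (hp : 1 < p) : avgMass p < ∞ := by
  have h1 : 1/p < 1 := by rw [div_lt_one (by linarith)]; exact hp
  have : IntegrableOn (fun v : ℝ => v ^ (-(1/p))) (Set.Ioo 0 1) :=
    (intervalIntegral.integrableOn_Ioo_rpow_iff one_pos).2 (by linarith)
  exact this.lintegral_lt_top

/-- The integral converges at the origin since `0 < σ` and at infinity since `σ < 1/p`. -/
lemma potMass_lt_top {p σ : ℝ} (hσ : 0 < σ) (hσp : σ < 1/p) : potMass p σ < ∞ := by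
  have h1 : IntegrableOn (fun v : ℝ => v ^ (σ - 1) * (max 1 v) ^ (-(1/p))) (Set.Ioo 0 1) := by
    have : IntegrableOn (fun v : ℝ => v ^ (σ - 1)) (Set.Ioo 0 1) :=
      (intervalIntegral.integrableOn_Ioo_rpow_iff one_pos).2 (by linarith)
    refine this.congr_fun (fun v hv => ?_) measurableSet_Ioo
    simp [max_eq_left hv.2.le]
  have h2 : IntegrableOn (fun v : ℝ => v ^ (σ - 1) * (max 1 v) ^ (-(1/p))) (Set.Ici 1) := by
    rw [integrableOn_Ici_iff_integrableOn_Ioi]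
    have := integrableOn_Ioi_rpow_of_lt (a := σ - 1 - 1/p) (by linarith) one_pos
    refine this.congr_fun (fun v hv => ?_) measurableSet_Ioi
    have hv : 1 < v := hv
    simp only
    rw [max_eq_right hv.le, ← Real.rpow_add (by linarith), sub_eq_add_neg (σ - 1)]
  have h3 := h1.union h2
  rw [Set.Ioo_union_Ici_eq_Ioi one_pos] at h3
  exact h3.lintegral_lt_top

variable {n : ℕ}

local notation "V" => EuclideanSpace ℝ (Fin n)

/-- The Lorentz bound `L^{p,q} → L^{p₁,q}` for superpositions of averaging kernels, obtained by
applying Hardy's inequality twice to O'Neil's inequality. -/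
lemma lorentz_le_of_kernel {p p₁ σ : ℝ} (hp1 : 1 / p₁ = 1 / p - σ)
    {q : ℝ≥0∞} (hq : 1 ≤ q) {f g : V → ℂ} (hf : Integrable f) (hg : Measurable g) {B : ℝ}
    (hB : ∀ x, ‖g x‖ ≤ B) {G : ℝ → V → ℝ≥0∞} (hG : Measurable (Function.uncurry G))
    (hGsup : ∀ u, 0 < u → ∀ z, G u z ≤ (ENNReal.ofReal u)⁻¹)
    (hGint : ∀ u, 0 < u → ∫⁻ z, G u z ≤ 1) {c : ℝ≥0∞}
    (hfg : ∀ x, ‖f x‖ₑ ≤ ∫⁻ u in Set.Ioi (0:ℝ), (c * ENNReal.ofReal (u ^ (σ - 1))) *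
      ∫⁻ y, G u (x - y) * ‖g y‖ₑ) :
    lorentz p₁ q f ≤ c * potMass p σ * avgMass p * lorentz p q g := by
  have hr : Measurable (rearr g) := (rearr_antitone hB).measurable
  have hA : Measurable (rearrAvg g) := (rearrAvg_antitone hB).measurable
  set φ : ℝ → ℝ≥0∞ := fun t => ENNReal.ofReal (t ^ (1/p) * rearr g t) with hφ
  set N : ℝ → ℝ≥0∞ := fun t => ENNReal.ofReal (t ^ (1/p)) * rearrAvg g t with hN
  have hφm : Measurable φ := by fun_prop
  have hNm : Measurable N := by fun_prop
  have step1 : haarLq q N ≤ avgMass p * haarLq q φ := by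
    have := haarLq_le hq ((volume.restrict (Set.Ioo (0:ℝ) 1)).withDensity
      (fun v => ENNReal.ofReal (v ^ (-(1/p))))) (m := fun v => v) measurable_id
      ((withDensity_absolutelyContinuous _ _).ae_le
        ((ae_restrict_mem measurableSet_Ioo).mono fun v hv => hv.1)) hφm (Φ := N) ?_
    · rwa [withDensity_apply _ MeasurableSet.univ, Measure.restrict_univ] at this
    · intro t ht
      rw [lintegral_withDensity_eq_lintegral_mul _ (by fun_prop) (by fun_prop)]
      simp only [hN, rearrAvg]
      rw [← lintegral_const_mul _ (by fun_prop)]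
      refine setLIntegral_mono' measurableSet_Ioo fun v hv => le_of_eq ?_
      have hv0 : 0 < v := hv.1
      simp only [Pi.mul_apply, hφ]
      rw [← ENNReal.ofReal_mul (by positivity), ← ENNReal.ofReal_mul (by positivity)]
      congr 1
      rw [Real.mul_rpow ht.le hv0.le, Real.rpow_neg hv0.le]
      field_simp
  have step2 : haarLq q (fun t => ENNReal.ofReal (t ^ (1/p₁) * rearr f t)) ≤
      c * potMass p σ * haarLq q N := by
    have := haarLq_le hq ((volume.restrict (Set.Ioi (0:ℝ))).withDensity
      (fun v => c * ENNReal.ofReal (v ^ (σ - 1) * (max 1 v) ^ (-(1/p)))))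
      (m := fun v => max 1 v) (by fun_prop)
      (Filter.Eventually.of_forall fun v => lt_max_of_lt_left one_pos) hNm
      (Φ := fun t => ENNReal.ofReal (t ^ (1/p₁) * rearr f t)) ?_
    · rwa [withDensity_apply _ MeasurableSet.univ, Measure.restrict_univ,
        lintegral_const_mul _ (by fun_prop)] at this
    · intro t ht
      rw [lintegral_withDensity_eq_lintegral_mul _ (by fun_prop) (by fun_prop)]
      rw [ENNReal.ofReal_mul (by positivity)]
      refine (mul_le_mul_right (oneil hf hg hB hG hGsup hGint (by fun_prop) hfg ht) _).trans ?_
      rw [lintegral_scale (by fun_prop) measurableSet_Ioi ht, ← mul_assoc]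
      have : (t * ·) ⁻¹' Set.Ioi (0:ℝ) = Set.Ioi 0 := by
        ext v; simp [ht]
      rw [this, ← lintegral_const_mul _ (by fun_prop)]
      refine setLIntegral_mono' measurableSet_Ioi fun v hv => le_of_eq ?_
      have hv0 : 0 < v := hv
      have hm0 : 0 < max 1 v := lt_max_of_lt_left one_pos
      simp only [Pi.mul_apply, hN]
      have hmax : max t (t * v) = t * max 1 v := by
        rw [mul_max_of_nonneg _ _ ht.le, mul_one]
      rw [hmax]
      have e : t ^ (1/p₁) * t * (t * v) ^ (σ - 1) =
          (v ^ (σ - 1) * max 1 v ^ (-(1/p))) * (t * max 1 v) ^ (1/p) := by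
        rw [hp1, Real.mul_rpow ht.le hv0.le, Real.mul_rpow ht.le hm0.le, Real.rpow_neg hm0.le,
          Real.rpow_sub ht, Real.rpow_sub_one ht.ne']
        field_simp
      have e' := congrArg ENNReal.ofReal e
      rw [ENNReal.ofReal_mul (by positivity), ENNReal.ofReal_mul (by positivity),
        ENNReal.ofReal_mul (by positivity)] at e'
      calc _ = c * (ENNReal.ofReal (t ^ (1/p₁)) * ENNReal.ofReal t *
            ENNReal.ofReal ((t * v) ^ (σ - 1))) * rearrAvg g (t * max 1 v) := by ring
        _ = _ := by rw [e']; ring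
  calc lorentz p₁ q f ≤ c * potMass p σ * haarLq q N := step2
    _ ≤ c * potMass p σ * (avgMass p * haarLq q φ) := by gcongr
    _ = c * potMass p σ * avgMass p * lorentz p q g := by rw [← mul_assoc]; rfl

end Constants

/-! ### Gaussian subordination -/

section Gaussian

variable {n : ℕ}

local notation "V" => EuclideanSpace ℝ (Fin n)

/-- The Gaussian of mass one, parametrised by its effective volume `u`: its maximum is `1/u`. -/
noncomputable def gaussKer (n : ℕ) (u : ℝ) (z : EuclideanSpace ℝ (Fin n)) : ℝ :=
  u⁻¹ * Real.exp (-(π * (u ^ (2 / (n:ℝ)))⁻¹) * ‖z‖ ^ 2)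

lemma gaussKer_nonneg {u : ℝ} (hu : 0 < u) (z : V) : 0 ≤ gaussKer n u z := by
  unfold gaussKer; positivity

lemma gaussKer_le {u : ℝ} (hu : 0 < u) (z : V) : gaussKer n u z ≤ u⁻¹ := by
  unfold gaussKer
  refine mul_le_of_le_one_right (by positivity) (Real.exp_le_one_iff.2 ?_)
  have : 0 ≤ π * (u ^ (2 / (n:ℝ)))⁻¹ * ‖z‖ ^ 2 := by positivity
  linarith

lemma gaussKer_measurable : Measurable (Function.uncurry (gaussKer n)) := by
  unfold Function.uncurry gaussKer
  fun_prop

lemma integral_gaussKer (hn : 1 ≤ n) {u : ℝ} (hu : 0 < u) : ∫ z : V, gaussKer n u z = 1 := by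
  have hn0 : (n:ℝ) ≠ 0 := by positivity
  unfold gaussKer
  rw [integral_const_mul, GaussianFourier.integral_rexp_neg_mul_sq_norm (by positivity)]
  have : π / (π * (u ^ (2 / (n:ℝ)))⁻¹) = u ^ (2 / (n:ℝ)) := by field_simp
  rw [this, ← Real.rpow_mul hu.le]
  simp only [finrank_euclideanSpace, Fintype.card_fin]
  rw [div_mul_div_cancel₀' two_ne_zero, div_self hn0, Real.rpow_one, inv_mul_cancel₀ hu.ne']

lemma integrable_gaussKer (hn : 1 ≤ n) {u : ℝ} (hu : 0 < u) :
    Integrable (fun z : V => gaussKer n u z) := by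
  by_contra h
  have := integral_gaussKer hn hu
  rw [integral_undef h] at this
  norm_num at this

/-- Convolving `𝓕⁻ H` with a Gaussian multiplies `H` by a Gaussian. This follows by moving the
Fourier transform across the pairing, so nothing is required of `𝓕⁻ H`. -/
lemma integral_gauss_mul (hn : 1 ≤ n) {u : ℝ} (hu : 0 < u) {H : V → ℂ} (hH : Integrable H)
    (x : V) :
    ∫ ξ, ((Real.exp (-(π * u ^ (2 / (n:ℝ))) * ‖ξ‖ ^ 2) : ℝ) : ℂ) *
        (Complex.exp (↑(2 * π * inner ℝ ξ x) * Complex.I) * H ξ) =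
      ∫ y, (gaussKer n u (x - y) : ℂ) * 𝓕⁻ H y := by
  have hn0 : (n:ℝ) ≠ 0 := by positivity
  set b : ℝ := π * u ^ (2 / (n:ℝ)) with hb
  have hb0 : 0 < b := by positivity
  have hbre : 0 < (b : ℂ).re := by simpa using hb0
  set J : V → ℂ := fun v => Complex.exp (-(b:ℂ) * ‖v‖ ^ 2 + 2 * π * Complex.I * inner ℝ x v)
    with hJ
  have hJi : Integrable J := GaussianFourier.integrable_cexp_neg_mul_sq_norm_add hbre _ _
  have hJc : Continuous J := by
    simp only [hJ]; fun_prop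
  have hFJ : 𝓕 J = fun y => (gaussKer n u (x - y) : ℂ) := by
    ext y
    rw [hJ, fourier_gaussian_innerProductSpace' hbre]
    have h1 : ((π : ℂ) / b) ^ ((Module.finrank ℝ V : ℂ) / 2) = ((u⁻¹ : ℝ) : ℂ) := by
      have h2 : (π / b) ^ ((Module.finrank ℝ V : ℝ) / 2) = u⁻¹ := by
        have : π / b = (u ^ (2 / (n:ℝ)))⁻¹ := by rw [hb]; field_simp
        rw [this, Real.inv_rpow (by positivity), ← Real.rpow_mul hu.le]
        simp only [finrank_euclideanSpace, Fintype.card_fin]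
        rw [div_mul_div_cancel₀' two_ne_zero, div_self hn0, Real.rpow_one]
      rw [← h2, Complex.ofReal_cpow (by positivity)]
      push_cast; rfl
    rw [h1, gaussKer]
    push_cast
    congr 2
    have : (u ^ (2 / (n:ℝ)) : ℝ) ≠ 0 := by positivity
    have hc : ((u ^ (2 / (n:ℝ)) : ℝ) : ℂ) ≠ 0 := by exact_mod_cast this
    have hπ : (π : ℂ) ≠ 0 := by exact_mod_cast Real.pi_ne_zero
    rw [hb]
    push_cast
    field_simp
  have hFJi : Integrable (𝓕 J) := by
    rw [hFJ]
    exact ((integrable_gaussKer hn hu).comp_sub_left x).ofReal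
  have hinv : 𝓕⁻ (𝓕 J) = J := hJc.fourierInv_fourier_eq hJi hFJi
  have flip := VectorFourier.integral_fourierIntegral_smul_eq_flip (L := -innerₗ V)
    (μ := volume) (ν := volume) (f := H) (g := 𝓕 J)
    Real.continuous_fourierChar (by exact continuous_inner.neg) hH hFJi
  have e1 : ∀ y, VectorFourier.fourierIntegral 𝐞 volume (-innerₗ V) H y = 𝓕⁻ H y := fun _ => rfl
  have e2 : ∀ ξ, VectorFourier.fourierIntegral 𝐞 volume (-innerₗ V).flip (𝓕 J) ξ = J ξ := by
    intro ξ
    rw [← hinv]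
    have : (-innerₗ V).flip = -innerₗ V := by
      ext a c; simp [real_inner_comm]
    rw [this, hinv]
    exact congrFun hinv ξ
  simp_rw [e1, e2, smul_eq_mul] at flip
  rw [hFJ] at flip
  calc _ = ∫ ξ, H ξ * J ξ := by
        refine integral_congr_ae (Filter.Eventually.of_forall fun ξ => ?_)
        simp only [hJ, Complex.exp_add, real_inner_comm]
        push_cast
        rw [show 2 * (π:ℂ) * (inner ℝ x ξ : ℝ) * Complex.I =
          2 * π * Complex.I * (inner ℝ x ξ : ℝ) by ring]
        ring
    _ = _ := by
        rw [← flip]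
        exact integral_congr_ae (Filter.Eventually.of_forall fun y => mul_comm _ _)

/-- The reciprocal normalisation in the subordination formula expressing `|ξ|^{-s}` as a
superposition of Gaussians: `∫₀^∞ u^{s/n-1} exp(-π u^{2/n} r²) du = subordConst n s * r^{-s}`. -/
noncomputable def subordConst (n : ℕ) (s : ℝ) : ℝ :=
  π ^ (-(s/2)) * ((n:ℝ)/2) * Real.Gamma (s/2)

lemma subordConst_pos (hn : 1 ≤ n) {s : ℝ} (hs : 0 < s) : 0 < subordConst n s := by
  have : 0 < Real.Gamma (s/2) := Real.Gamma_pos_of_pos (by positivity)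
  unfold subordConst; positivity

lemma integral_subord (hn : 1 ≤ n) {s r : ℝ} (hs : 0 < s) (hr : 0 < r) :
    ∫ u in Set.Ioi (0:ℝ), u ^ (s/n - 1) * Real.exp (-(π * u ^ (2 / (n:ℝ))) * r ^ 2) =
      subordConst n s * r ^ (-s) := by
  have hn0 : (0:ℝ) < n := by positivity
  have h := integral_rpow_mul_exp_neg_mul_rpow (p := 2 / (n:ℝ)) (q := s/n - 1) (b := π * r ^ 2)
    (by positivity) (by have : 0 < s/n := by positivity
                        linarith) (by positivity)
  have e : ∀ u : ℝ, -(π * u ^ (2 / (n:ℝ))) * r ^ 2 = -(π * r ^ 2) * u ^ (2 / (n:ℝ)) :=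
    fun u => by ring
  simp_rw [e]
  rw [h, sub_add_cancel]
  have e2 : s / n / (2 / (n:ℝ)) = s/2 := by field_simp
  rw [neg_div, e2, Real.mul_rpow (by positivity) (by positivity), ← Real.rpow_natCast,
    ← Real.rpow_mul hr.le, subordConst]
  have e3 : ((2:ℕ):ℝ) * -(s/2) = -s := by push_cast; ring
  rw [e3, one_div_div]
  ring

lemma integrableOn_subord (hn : 1 ≤ n) {s r : ℝ} (hs : 0 < s) (hr : 0 < r) :
    IntegrableOn (fun u => u ^ (s/n - 1) * Real.exp (-(π * u ^ (2 / (n:ℝ))) * r ^ 2))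
      (Set.Ioi (0:ℝ)) := by
  by_contra h
  have := integral_subord hn hs hr
  rw [integral_undef h] at this
  have h2 := subordConst_pos hn hs
  have : 0 < subordConst n s * r ^ (-s) := by positivity
  linarith

/-- The function `|ξ|^s 𝓕f(ξ)`, whose inverse Fourier transform is `(-Δ)^{s/2} f`. -/
noncomputable def fracSymb (s : ℝ) (f : V → ℂ) (ξ : V) : ℂ := ((‖ξ‖ ^ s : ℝ) : ℂ) * 𝓕 f ξ

lemma fracSymb_continuous {s : ℝ} (hs : 0 < s) (f : SchwartzMap V ℂ) :
    Continuous (fracSymb s ⇑f) := by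
  have h1 : Continuous (𝓕 (⇑f) : V → ℂ) := by
    rw [← SchwartzMap.fourier_coe]; exact (𝓕 f).continuous
  have h2 : Continuous (fun ξ : V => ‖ξ‖ ^ s) :=
    continuous_norm.rpow_const fun _ => Or.inr hs.le
  exact (Complex.continuous_ofReal.comp h2).mul h1

lemma fracSymb_integrable {s : ℝ} (hs : 0 < s) (f : SchwartzMap V ℂ) :
    Integrable (fracSymb s ⇑f) := by
  -- Dominate `r^s` by `1 + r^k` with an integer `k ≥ s`.
  obtain ⟨k, hk⟩ := exists_nat_ge s
  have h0 := (𝓕 f).integrable.norm (μ := volume)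
  have h1 := (𝓕 f).integrable_pow_mul volume k
  refine (h0.add h1).mono' (fracSymb_continuous hs f).aestronglyMeasurable
    (Filter.Eventually.of_forall fun ξ => ?_)
  have hb : ‖ξ‖ ^ s ≤ 1 + ‖ξ‖ ^ k := by
    rcases le_total ‖ξ‖ 1 with h | h
    · have := Real.rpow_le_one (norm_nonneg ξ) h hs.le
      have : 0 ≤ ‖ξ‖ ^ k := by positivity
      linarith
    · have := Real.rpow_le_rpow_of_exponent_le h hk
      rw [Real.rpow_natCast] at this
      linarith
  rw [fracSymb, norm_mul, Complex.norm_real, Real.norm_of_nonneg (by positivity),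
    ← SchwartzMap.fourier_coe]
  calc _ ≤ (1 + ‖ξ‖ ^ k) * ‖(𝓕 f) ξ‖ := by gcongr
    _ = _ := by simp; ring

/-- The pointwise bound of `f` by Gaussian averages of `|(-Δ)^{s/2} f|`, from the subordination
formula `|ξ|^{-s} = c ∫₀^∞ u^{s/n-1} exp(-π u^{2/n} |ξ|²) du`. -/
lemma enorm_le_gauss (hn : 1 ≤ n) {s : ℝ} (hs : 0 < s) (f : SchwartzMap V ℂ) (x : V) :
    ‖f x‖ₑ ≤ ∫⁻ u in Set.Ioi (0:ℝ),
      ((ENNReal.ofReal (subordConst n s))⁻¹ * ENNReal.ofReal (u ^ (s/n - 1))) *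
      ∫⁻ y, ENNReal.ofReal (gaussKer n u (x - y)) * ‖fracLap s ⇑f y‖ₑ := by
  have hn0 : (0:ℝ) < n := by positivity
  have : NeZero n := ⟨by omega⟩
  have hκ := subordConst_pos hn hs
  set κ := subordConst n s with hκd
  set H := fracSymb s ⇑f with hHd
  have hHc : Continuous H := fracSymb_continuous hs f
  have hHi : Integrable H := fracSymb_integrable hs f
  have hF : Integrable (𝓕 (⇑f) : V → ℂ) := by
    rw [← SchwartzMap.fourier_coe]; exact (𝓕 f).integrable
  set e : V → ℂ := fun ξ => Complex.exp (↑(2 * π * inner ℝ ξ x) * Complex.I) with he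
  have hec : Continuous e := by simp only [he]; fun_prop
  have hen : ∀ ξ, ‖e ξ‖ = 1 := fun ξ => Complex.norm_exp_ofReal_mul_I _
  set ψ : V → ℝ → ℝ := fun ξ u => u ^ (s/n - 1) * Real.exp (-(π * u ^ (2 / (n:ℝ))) * ‖ξ‖ ^ 2)
    with hψ
  have hψ0 : ∀ ξ, ∀ u ∈ Set.Ioi (0:ℝ), 0 ≤ ψ ξ u := fun ξ u hu => by
    have : 0 < u := hu
    simp only [hψ]; positivity
  have hne : ∀ᵐ ξ : V, ξ ≠ 0 := by
    simp [ae_iff, measure_singleton]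
  have hψF : ∀ ξ : V, ξ ≠ 0 → ((∫ u in Set.Ioi (0:ℝ), ψ ξ u : ℝ) : ℂ) * H ξ = κ * 𝓕 (⇑f) ξ := by
    intro ξ hξ
    have hξ0 : 0 < ‖ξ‖ := norm_pos_iff.2 hξ
    simp only [hψ, hHd, fracSymb]
    rw [integral_subord hn hs hξ0, ← mul_assoc, ← Complex.ofReal_mul, mul_assoc,
      ← Real.rpow_add hξ0, neg_add_cancel, Real.rpow_zero, mul_one]
  have hprodInt : Integrable (Function.uncurry fun (ξ : V) (u : ℝ) => (ψ ξ u : ℂ) * (e ξ * H ξ))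
      (volume.prod (volume.restrict (Set.Ioi (0:ℝ)))) := by
    have hmeas : Measurable (Function.uncurry fun (ξ : V) (u : ℝ) => (ψ ξ u : ℂ) * (e ξ * H ξ)) := by
      have h1 : Measurable (fun z : V × ℝ => ψ z.1 z.2) := by
        simp only [hψ]; fun_prop
      have h2 : Measurable (fun z : V × ℝ => e z.1 * H z.1) :=
        ((hec.mul hHc).measurable).comp measurable_fst
      exact (Complex.measurable_ofReal.comp h1).mul h2
    refine (integrable_prod_iff hmeas.aestronglyMeasurable).2 ⟨?_, ?_⟩
    · filter_upwards [hne] with ξ hξ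
      have h : Integrable (ψ ξ) (volume.restrict (Set.Ioi 0)) :=
        integrableOn_subord hn hs (norm_pos_iff.2 hξ)
      exact (Integrable.ofReal (𝕜 := ℂ) h).mul_const (e ξ * H ξ)
    · refine (hF.norm.const_mul κ).congr ?_
      filter_upwards [hne] with ξ hξ
      have h1 : ∫ u in Set.Ioi (0:ℝ), ‖Function.uncurry
          (fun (ξ : V) (u : ℝ) => (ψ ξ u : ℂ) * (e ξ * H ξ)) (ξ, u)‖ =
          ∫ u in Set.Ioi (0:ℝ), ψ ξ u * ‖H ξ‖ := by
        refine setIntegral_congr_fun measurableSet_Ioi fun u hu => ?_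
        simp only [Function.uncurry_apply_pair, norm_mul, hen, one_mul, Complex.norm_real]
        rw [Real.norm_of_nonneg (hψ0 ξ u hu)]
      rw [h1, integral_mul_const]
      have h2 := congrArg norm (hψF ξ hξ)
      rw [norm_mul, norm_mul, Complex.norm_real, Complex.norm_real,
        Real.norm_of_nonneg (setIntegral_nonneg measurableSet_Ioi (hψ0 ξ)),
        Real.norm_of_nonneg hκ.le] at h2
      exact h2.symm
  have hrep : (κ : ℂ) * f x = ∫ u in Set.Ioi (0:ℝ),
      ((u ^ (s/n - 1) : ℝ) : ℂ) * ∫ y, (gaussKer n u (x - y) : ℂ) * fracLap s ⇑f y := by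
    have hfx : f x = ∫ ξ, e ξ * 𝓕 (⇑f) ξ := by
      have h1 : 𝓕⁻ (𝓕 (⇑f) : V → ℂ) = ⇑f :=
        f.continuous.fourierInv_fourier_eq f.integrable hF
      conv_lhs => rw [← h1]
      rw [Real.fourierInv_eq']
      rfl
    calc (κ : ℂ) * f x = ∫ ξ, ∫ u in Set.Ioi (0:ℝ), (ψ ξ u : ℂ) * (e ξ * H ξ) := by
          rw [hfx, ← integral_const_mul]
          refine integral_congr_ae ?_
          filter_upwards [hne] with ξ hξ
          have h : (∫ u in Set.Ioi (0:ℝ), (ψ ξ u : ℂ)) =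
            ((∫ u in Set.Ioi (0:ℝ), ψ ξ u : ℝ) : ℂ) := integral_complex_ofReal
          rw [integral_mul_const, h, mul_left_comm, mul_left_comm _ (e ξ), hψF ξ hξ]
      _ = ∫ u in Set.Ioi (0:ℝ), ∫ ξ, (ψ ξ u : ℂ) * (e ξ * H ξ) := integral_integral_swap hprodInt
      _ = _ := by
          refine setIntegral_congr_fun measurableSet_Ioi fun u hu => ?_
          have hlap : fracLap s ⇑f = 𝓕⁻ H := rfl
          rw [hlap, ← integral_gauss_mul hn hu hHi x, ← integral_const_mul]
          refine integral_congr_ae (Filter.Eventually.of_forall fun ξ => ?_)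
          simp only [hψ, he]
          push_cast
          ring
  have hκ0 : ENNReal.ofReal κ ≠ 0 := by simp [hκ]
  have hle : ENNReal.ofReal κ * ‖f x‖ₑ ≤ ∫⁻ u in Set.Ioi (0:ℝ), ENNReal.ofReal (u ^ (s/n - 1)) *
      ∫⁻ y, ENNReal.ofReal (gaussKer n u (x - y)) * ‖fracLap s ⇑f y‖ₑ := by
    have h1 : ENNReal.ofReal κ * ‖f x‖ₑ = ‖(κ : ℂ) * f x‖ₑ := by
      rw [enorm_mul, ← ofReal_norm (κ : ℂ), Complex.norm_real, Real.norm_of_nonneg hκ.le]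
    rw [h1, hrep]
    refine (enorm_integral_le_lintegral_enorm _).trans ?_
    refine setLIntegral_mono' measurableSet_Ioi fun u hu => ?_
    have hu0 : 0 < u := hu
    rw [enorm_mul, ← ofReal_norm ((u ^ (s/n - 1) : ℝ) : ℂ), Complex.norm_real,
      Real.norm_of_nonneg (by positivity)]
    gcongr
    refine (enorm_integral_le_lintegral_enorm _).trans (lintegral_mono fun y => ?_)
    rw [enorm_mul, ← ofReal_norm (gaussKer n u (x - y) : ℂ), Complex.norm_real,
      Real.norm_of_nonneg (gaussKer_nonneg hu0 _)]
  calc ‖f x‖ₑ = (ENNReal.ofReal κ)⁻¹ * (ENNReal.ofReal κ * ‖f x‖ₑ) := by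
        rw [← mul_assoc, ENNReal.inv_mul_cancel hκ0 ENNReal.ofReal_ne_top, one_mul]
    _ ≤ _ := mul_le_mul_right hle _
    _ = _ := by
        rw [← lintegral_const_mul' _ _ (by simp [hκ])]
        simp_rw [mul_assoc]

end Gaussian

/-! ### The Sobolev inequality -/

/-- Sobolev inequality in Lorentz spaces. -/
theorem lorentz_sobolev (n : ℕ) (hn : 1 ≤ n) (p p₁ s : ℝ) (q : ℝ≥0∞)
    (hp : 1 < p) (hq : 1 ≤ q) (hs : 0 < s) (hs2 : s < n / p)
    (hp1 : 1 / p₁ = 1 / p - s / n) :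
    ∃ C > 0, ∀ f : SchwartzMap (EuclideanSpace ℝ (Fin n)) ℂ,
      lorentz p₁ q (⇑f) ≤ ENNReal.ofReal C * lorentz p q (fracLap s ⇑f) := by
  have hn0 : (0:ℝ) < n := by positivity
  have hσ : 0 < s / n := by positivity
  have hσp : s / n < 1 / p := by
    rw [lt_div_iff₀ (by linarith)] at hs2
    rw [div_lt_div_iff₀ hn0 (by linarith), one_mul]
    exact hs2
  set c : ℝ≥0∞ := (ENNReal.ofReal (subordConst n s))⁻¹ with hc
  have hctop : c ≠ ∞ := by simp [hc, subordConst_pos hn hs]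
  set K : ℝ≥0∞ := c * potMass p (s/n) * avgMass p with hK
  have hKtop : K ≠ ∞ := ENNReal.mul_ne_top
    (ENNReal.mul_ne_top hctop (potMass_lt_top hσ hσp).ne) (avgMass_lt_top hp).ne
  refine ⟨K.toReal + 1, by positivity, fun f => ?_⟩
  have hHi := fracSymb_integrable hs f
  have hgc : Continuous (fracLap s ⇑f) := VectorFourier.fourierIntegral_continuous
    Real.continuous_fourierChar (by exact continuous_inner.neg) hHi
  have hgB : ∀ x, ‖fracLap s ⇑f x‖ ≤ ∫ ξ, ‖fracSymb s ⇑f ξ‖ := fun x =>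
    VectorFourier.norm_fourierIntegral_le_integral_norm _ _ _ _ _
  have main := lorentz_le_of_kernel (p₁ := p₁) hp1 hq f.integrable hgc.measurable hgB
    (G := fun u z => ENNReal.ofReal (gaussKer n u z)) gaussKer_measurable.ennreal_ofReal
    (fun u hu z => by
      rw [← ENNReal.ofReal_inv_of_pos hu]
      exact ENNReal.ofReal_le_ofReal (gaussKer_le hu z))
    (fun u hu => by
      rw [← ofReal_integral_eq_lintegral_ofReal (integrable_gaussKer hn hu)
        (Filter.Eventually.of_forall (gaussKer_nonneg hu)), integral_gaussKer hn hu]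
      simp)
    (enorm_le_gauss hn hs f)
  refine main.trans ?_
  gcongr
  rw [← hK]
  calc K = ENNReal.ofReal K.toReal := (ENNReal.ofReal_toReal hKtop).symm
    _ ≤ _ := ENNReal.ofReal_le_ofReal (by linarith)
end
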